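/- arXiv:2404.12568 — 5 statements merged into one kernel-verified Lean document; each statement's English description precedes it below -/
import Mathlib

section
/- Let W ∈ ℝ^{n×p} satisfy WᵀW = I_p, let B' ∈ ℝ^{p×p} and r' ∈ ℝ^p, and set B = W B' Wᵀ and r = W r'. Then: (a) if z ∈ ℝ^p satisfies B'z = −r', then w = Wz satisfies Bw = −r; (b) for every j ∈ ℕ and every z ∈ K_j(B', r'), the vector w = Wz lies in K_j(B, r) and ‖Bw + r‖ = ‖B'z + r'‖; consequently min_{w ∈ K_j(B, r)} ‖Bw + r‖ = min_{z ∈ K_j(B', r')} ‖B'z + r'‖, i.e., the j-th MINRES residual norms (zero initial guesses) for the systems Bw = −r and B'z = −r' coincide for all j. -/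
open Matrix

noncomputable def vnorm {ι : Type*} [Fintype ι] (x : ι → ℝ) : ℝ :=
  Real.sqrt (∑ i, x i ^ 2)

noncomputable def Krylov {ι : Type*} [Fintype ι] [DecidableEq ι]
    (B : Matrix ι ι ℝ) (r : ι → ℝ) (j : ℕ) : Submodule ℝ (ι → ℝ) :=
  Submodule.span ℝ {x | ∃ i < j, x = (B ^ i) *ᵥ r}

/-- With `WᵀW = I`, `B = W B' Wᵀ`, `r = W r'`:
(a) solutions transfer; (b) `w = Wz` preserves membership in Krylov subspaces and residual
norms; consequently the `j`-th MINRES residual norms (zero initial guesses) for `Bw = -r`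
and `B'z = -r'` coincide for all `j`. -/
theorem minres_residuals_coincide {n p : ℕ}
    (W : Matrix (Fin n) (Fin p) ℝ) (hW : Wᵀ * W = 1)
    (B' : Matrix (Fin p) (Fin p) ℝ) (r' : Fin p → ℝ)
    (B : Matrix (Fin n) (Fin n) ℝ) (hB : B = W * B' * Wᵀ)
    (r : Fin n → ℝ) (hr : r = W *ᵥ r') :
    (∀ z : Fin p → ℝ, B' *ᵥ z = -r' → B *ᵥ (W *ᵥ z) = -r) ∧
    (∀ j : ℕ, ∀ z ∈ Krylov B' r' j,
      W *ᵥ z ∈ Krylov B r j ∧ vnorm (B *ᵥ (W *ᵥ z) + r) = vnorm (B' *ᵥ z + r')) ∧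
    (∀ j : ℕ,
      sInf ((fun w => vnorm (B *ᵥ w + r)) '' (Krylov B r j : Set (Fin n → ℝ))) =
        sInf ((fun z => vnorm (B' *ᵥ z + r')) '' (Krylov B' r' j : Set (Fin p → ℝ)))) := by
  have hWW : ∀ z : Fin p → ℝ, Wᵀ *ᵥ (W *ᵥ z) = z := by
    intro z
    rw [Matrix.mulVec_mulVec, hW, Matrix.one_mulVec]
  have hBW : ∀ z : Fin p → ℝ, B *ᵥ (W *ᵥ z) = W *ᵥ (B' *ᵥ z) := by
    intro z
    rw [hB, ← Matrix.mulVec_mulVec, hWW, Matrix.mulVec_mulVec]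
  have hpow : ∀ i : ℕ, (B ^ i) *ᵥ r = W *ᵥ ((B' ^ i) *ᵥ r') := by
    intro i
    induction i with
    | zero => simp [hr]
    | succ k ih =>
      rw [pow_succ', pow_succ', ← Matrix.mulVec_mulVec, ih, hBW, Matrix.mulVec_mulVec r' B']
  have hnorm : ∀ z : Fin p → ℝ, vnorm (W *ᵥ z) = vnorm z := by
    intro z
    have h : (W *ᵥ z) ⬝ᵥ (W *ᵥ z) = z ⬝ᵥ z := by
      rw [Matrix.dotProduct_mulVec, ← Matrix.mulVec_transpose, hWW]
    simp only [dotProduct, ← pow_two] at h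
    unfold vnorm
    rw [h]
  have hres : ∀ z : Fin p → ℝ, vnorm (B *ᵥ (W *ᵥ z) + r) = vnorm (B' *ᵥ z + r') := by
    intro z
    rw [hBW, hr, ← Matrix.mulVec_add, hnorm]
  have hmap : ∀ j : ℕ, Krylov B r j = (Krylov B' r' j).map W.mulVecLin := by
    intro j
    unfold Krylov
    rw [Submodule.map_span]
    congr 1
    ext x
    constructor
    · rintro ⟨i, hi, rfl⟩
      exact ⟨_, ⟨i, hi, rfl⟩, (hpow i).symm⟩
    · rintro ⟨_, ⟨i, hi, rfl⟩, rfl⟩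
      exact ⟨i, hi, (hpow i).symm⟩
  refine ⟨?_, ?_, ?_⟩
  · intro z hz
    rw [hBW, hz, hr, Matrix.mulVec_neg]
  · intro j z hz
    refine ⟨?_, hres z⟩
    rw [hmap]
    exact ⟨z, hz, rfl⟩
  · intro j
    rw [hmap, Submodule.map_coe, Set.image_image]
    simp only [Matrix.mulVecLin_apply, hres]
end

section
/- Assume τ > (σ_max + σ_max,2)/2 and let r ∈ ℝ^{M+N} satisfy Π r = r. Then σ₁ = σ_max, and for every j ∈ ℕ there exists w ∈ K_j(B₁, r) such that ‖B₁ w + r‖ ≤ 2 · (1 − 2/(1 + √((τ + σ_max,2)/(τ − σ_max,2))))^j · ‖r‖; that is, the j-th MINRES residual for the JDSVD correction equation B₁ w = −r (with exact singular vectors u₁, v₁) satisfies this bound. -/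
open Matrix

open Polynomial in
lemma cheb_inv (ρ : ℝ) (hρ : ρ ≠ 0) (n : ℕ) :
    (Chebyshev.T ℝ n).eval ((ρ + ρ⁻¹) / 2) = (ρ ^ n + (ρ⁻¹) ^ n) / 2 := by
  induction n using Nat.twoStepInduction with
  | zero => simp
  | one => simp
  | more n h1 h2 =>
    push_cast at h1 h2 ⊢
    rw [Chebyshev.T_add_two]
    simp only [eval_sub, eval_mul, eval_ofNat, eval_X, h1, h2]
    have : ρ * ρ⁻¹ = 1 := mul_inv_cancel₀ hρ
    generalize ρ⁻¹ = s at *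
    have e : (ρ ^ n * (ρ * s) + s ^ n * (ρ * s)) = ρ ^ n + s ^ n := by rw [this]; ring
    linear_combination e / 2

open Polynomial in
lemma poly_bound (a τ : ℝ) (ha : 0 ≤ a) (haτ : a < τ) (j : ℕ) :
    ∃ q : ℝ[X], q.natDegree ≤ j ∧ q.eval τ = 1 ∧ ∀ x, |x| ≤ a →
      |q.eval x| ≤ 2 * (1 - 2 / (1 + Real.sqrt ((τ + a) / (τ - a)))) ^ j := by
  have hτ : 0 < τ := by linarith
  rcases ha.eq_or_lt with rfl | ha
  · refine ⟨(C τ⁻¹ * X) ^ j, ?_, ?_, ?_⟩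
    · compute_degree
    · simp [hτ.ne']
    · intro x hx
      have : x = 0 := by simpa using hx
      subst this
      have : (1 : ℝ) - 2 / (1 + √((τ + 0) / (τ - 0))) = 0 := by
        simp [hτ.ne']; norm_num
      rw [this]
      rcases j with _ | j <;> simp
  · set s := √((τ + a) / (τ - a)) with hs
    have hs2 : s ^ 2 = (τ + a) / (τ - a) := Real.sq_sqrt (div_nonneg (by linarith) (by linarith))
    have hs0 : 0 ≤ s := Real.sqrt_nonneg _
    have hs1 : 1 < s := by
      rw [hs]; apply Real.lt_sqrt_of_sq_lt
      rw [lt_div_iff₀ (by linarith)]; linarith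
    have hs3 : s ^ 2 * (τ - a) = τ + a := by
      rw [hs2, div_mul_cancel₀]; linarith
    set ρ := 1 - 2 / (1 + s) with hρ
    have hρ' : ρ = (s - 1) / (s + 1) := by rw [hρ]; field_simp; ring
    have hρ0 : 0 < ρ := by rw [hρ']; apply div_pos <;> linarith
    have hτa : τ / a = (ρ + ρ⁻¹) / 2 := by
      rw [hρ']
      have : s - 1 ≠ 0 := by linarith
      have : s + 1 ≠ 0 := by linarith
      field_simp
      linear_combination 2 * hs3
    have hT : (Chebyshev.T ℝ j).eval (τ / a) = (ρ ^ j + (ρ⁻¹) ^ j) / 2 := by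
      rw [hτa, cheb_inv ρ hρ0.ne']
    have hTpos : 0 < (ρ ^ j + (ρ⁻¹) ^ j) / 2 := by positivity
    refine ⟨C ((ρ ^ j + (ρ⁻¹) ^ j) / 2)⁻¹ * (Chebyshev.T ℝ j).comp (C a⁻¹ * X), ?_, ?_, ?_⟩
    · refine (natDegree_C_mul_le _ _).trans (natDegree_comp_le.trans ?_)
      have h1 : (C a⁻¹ * X : ℝ[X]).natDegree ≤ 1 := by compute_degree
      have h2 : (Chebyshev.T ℝ j).natDegree ≤ j := by simp
      nlinarith
    · simp only [eval_mul, eval_C, eval_comp, eval_X]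
      rw [inv_mul_eq_div a, hT, inv_mul_cancel₀ hTpos.ne']
    · intro x hx
      simp only [eval_mul, eval_C, eval_comp, eval_X, abs_mul]
      have h1 : |(Chebyshev.T ℝ j).eval (a⁻¹ * x)| ≤ 1 := by
        apply Chebyshev.abs_eval_T_real_le_one
        rw [inv_mul_eq_div, abs_div, abs_of_pos ha, div_le_one ha]; exact hx
      rw [abs_of_pos (inv_pos.mpr hTpos)]
      refine (mul_le_of_le_one_right (inv_pos.mpr hTpos).le h1).trans ?_
      rw [inv_le_iff_one_le_mul₀ hTpos]
      have : ρ ^ j * (ρ⁻¹) ^ j = 1 := by rw [← mul_pow, mul_inv_cancel₀ hρ0.ne', one_pow]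
      have : 0 < ρ ^ j := by positivity
      nlinarith

open Polynomial in
lemma krylov_poly {ι : Type*} [Fintype ι] [DecidableEq ι] (B : Matrix ι ι ℝ) (r : ι → ℝ) (j : ℕ)
    (p : ℝ[X]) (hp : p.natDegree ≤ j) (h0 : p.eval 0 = 1) :
    ∃ w ∈ Krylov B r j, B *ᵥ w + r = (aeval B p) *ᵥ r := by
  refine ⟨(aeval B p.divX) *ᵥ r, ?_, ?_⟩
  · rcases j with _ | j
    · have : p.divX = 0 := by
        rw [divX_eq_zero_iff]; exact eq_C_of_natDegree_le_zero hp
      simp [this]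
    · have hd : p.divX.natDegree < j + 1 := by rw [natDegree_divX_eq_natDegree_tsub_one]; omega
      rw [aeval_eq_sum_range' hd, Matrix.sum_mulVec]
      refine Submodule.sum_mem _ fun i hi => ?_
      rw [Matrix.smul_mulVec]
      exact Submodule.smul_mem _ _ (Submodule.subset_span ⟨i, by simpa using hi, rfl⟩)
  · conv_rhs => rw [← X_mul_divX_add p]
    rw [coeff_zero_eq_eval_zero, h0]
    simp [Matrix.add_mulVec]

lemma vnorm_eq {ι : Type*} [Fintype ι] (x : ι → ℝ) : vnorm x = ‖WithLp.toLp 2 x‖ := by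
  simp [vnorm, EuclideanSpace.norm_eq]

open Polynomial in
lemma spectral_bound {ι : Type*} [Fintype ι] [DecidableEq ι] (H : Matrix ι ι ℝ)
    (hH : H.IsHermitian) (f : ℝ[X]) (K : ℝ) (hK : 0 ≤ K)
    (hf : ∀ (l : ℝ) (x : ι → ℝ), x ≠ 0 → H *ᵥ x = l • x → |f.eval l| ≤ K) (x : ι → ℝ) :
    vnorm ((aeval H f) *ᵥ x) ≤ K * vnorm x := by
  set b := hH.eigenvectorBasis
  set e := hH.eigenvalues
  have hb : ∀ i, H *ᵥ (b i).ofLp = e i • (b i).ofLp := fun i => hH.mulVec_eigenvectorBasis i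
  have hpow : ∀ (n : ℕ) i, (H ^ n) *ᵥ (b i).ofLp = (e i ^ n) • (b i).ofLp := by
    intro n i
    induction n with
    | zero => simp
    | succ n ih => rw [pow_succ, ← Matrix.mulVec_mulVec, hb, Matrix.mulVec_smul, ih, smul_smul, pow_succ, mul_comm]
  have hfb : ∀ i, (aeval H f) *ᵥ (b i).ofLp = (f.eval (e i)) • (b i).ofLp := by
    intro i
    rw [aeval_eq_sum_range, eval_eq_sum_range, Matrix.sum_mulVec, Finset.sum_smul]
    refine Finset.sum_congr rfl fun n _ => ?_
    rw [Matrix.smul_mulVec, hpow, smul_smul]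
  have hfs : (aeval H f)ᵀ = aeval H f := by
    have hHT : Hᵀ = H := by simpa [Matrix.IsHermitian, Matrix.conjTranspose_eq_transpose_of_trivial] using hH
    rw [aeval_eq_sum_range, Matrix.transpose_sum]
    refine Finset.sum_congr rfl fun n _ => ?_
    rw [Matrix.transpose_smul, Matrix.transpose_pow, hHT]
  have hin : ∀ i, inner ℝ (b i) (WithLp.toLp 2 ((aeval H f) *ᵥ x)) =
      f.eval (e i) * inner ℝ (b i) (WithLp.toLp 2 x) := by
    intro i
    rw [EuclideanSpace.inner_eq_star_dotProduct, EuclideanSpace.inner_eq_star_dotProduct]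
    simp only [star_trivial]
    rw [dotProduct_comm, Matrix.dotProduct_mulVec, ← Matrix.mulVec_transpose, hfs, hfb, smul_dotProduct,
      smul_eq_mul, dotProduct_comm x]
  rw [vnorm_eq, vnorm_eq]
  refine le_of_sq_le_sq ?_ (by positivity)
  rw [mul_pow, ← b.sum_sq_norm_inner_right, ← b.sum_sq_norm_inner_right, Finset.mul_sum]
  refine Finset.sum_le_sum fun i _ => ?_
  rw [hin, norm_mul, mul_pow]
  have : |f.eval (e i)| ≤ K := hf _ _ (by
    intro h
    have h1 := b.orthonormal.ne_zero i
    apply h1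
    ext k; simpa using congrFun h k) (hb i)
  gcongr
  simpa using this

lemma block_eig {m n : Type*} [Fintype m] [Fintype n]
    (A : Matrix m n ℝ) (a : ℝ) (ha : 0 ≤ a)
    (hA : ∀ z, (A *ᵥ z) ⬝ᵥ (A *ᵥ z) ≤ a ^ 2 * (z ⬝ᵥ z))
    (l : ℝ) (x : m ⊕ n → ℝ) (hx : x ≠ 0) (h : Matrix.fromBlocks 0 A Aᵀ 0 *ᵥ x = l • x) : |l| ≤ a := by
  set y := x ∘ Sum.inl with hy
  set z := x ∘ Sum.inr with hz
  rw [Matrix.fromBlocks_mulVec] at h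
  have h1 : A *ᵥ z = l • y := by
    ext i; simpa [hy, hz] using congrFun h (Sum.inl i)
  have h2 : Aᵀ *ᵥ y = l • z := by
    ext i; simpa [hy, hz] using congrFun h (Sum.inr i)
  by_cases hz0 : z = 0
  · rw [hz0, Matrix.mulVec_zero] at h1
    have hy0 : y ≠ 0 := by
      intro hy0
      apply hx
      ext (i | i)
      · exact congrFun hy0 i
      · exact congrFun hz0 i
    have : l = 0 := by
      rcases smul_eq_zero.mp h1.symm with h | h
      · exact h
      · exact absurd h hy0
    simp [this, ha]
  · have hp : 0 < z ⬝ᵥ z := by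
      have := (dotProduct_self_eq_zero (v := z)).not.mpr hz0
      exact lt_of_le_of_ne (Finset.sum_nonneg fun i _ => mul_self_nonneg _) (Ne.symm this)
    have h3 : (A *ᵥ z) ⬝ᵥ (A *ᵥ z) = l ^ 2 * (z ⬝ᵥ z) := by
      conv_lhs => rw [h1]
      rw [← h1, Matrix.dotProduct_mulVec, ← Matrix.mulVec_transpose, h1, Matrix.mulVec_smul, h2]
      simp; ring
    have h4 := hA z
    rw [h3] at h4
    exact abs_le_of_sq_le_sq (le_of_mul_le_mul_right h4 hp) ha

lemma proj_eq {n : Type*} [Fintype n] [DecidableEq n] (U : Matrix n n ℝ) (hU : Uᵀ * U = 1) (k : n)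
    (u : n → ℝ) (hu : u = fun i => U i k) :
    1 - vecMulVec u u = U * Matrix.diagonal (fun i => if i = k then (0 : ℝ) else 1) * Uᵀ := by
  have hU' : U * Uᵀ = 1 := mul_eq_one_comm.mp hU
  have h1 : vecMulVec u u = U * Matrix.diagonal (fun i => if i = k then (1 : ℝ) else 0) * Uᵀ := by
    ext i j
    simp [Matrix.mul_apply, hu, vecMulVec_apply, Matrix.diagonal_apply]
  have h2 : Matrix.diagonal (fun i => if i = k then (0 : ℝ) else 1) =
      1 - Matrix.diagonal (fun i => if i = k then (1 : ℝ) else 0) := by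
    rw [← Matrix.diagonal_one, Matrix.diagonal_sub]
    congr 1; ext i; split_ifs <;> simp
  rw [h1, h2, mul_sub, sub_mul, mul_one, hU']

lemma proj_idem {n : Type*} [Fintype n] [DecidableEq n] (U : Matrix n n ℝ) (hU : Uᵀ * U = 1) (k : n)
    (u : n → ℝ) (hu : u = fun i => U i k) :
    (1 - vecMulVec u u) * (1 - vecMulVec u u) = 1 - vecMulVec u u := by
  have h : u ⬝ᵥ u = 1 := by
    have := congrFun (congrFun hU k) k
    simpa [Matrix.mul_apply, dotProduct, hu] using this
  have : vecMulVec u u * vecMulVec u u = vecMulVec u u := by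
    rw [vecMulVec_mul_vecMulVec, h, one_smul]
  rw [mul_sub, sub_mul, sub_mul, this]; simp

lemma svd_bound {M N : ℕ} (hN : 0 < N) (hMN : N ≤ M)
    (U : Matrix (Fin M) (Fin M) ℝ) (V : Matrix (Fin N) (Fin N) ℝ)
    (hU : Uᵀ * U = 1) (hV : Vᵀ * V = 1)
    (σ : Fin N → ℝ) (a : ℝ)
    (hσ : ∀ i : Fin N, i ≠ ⟨0, hN⟩ → 0 ≤ σ i ∧ σ i ≤ a)
    (S : Matrix (Fin M) (Fin N) ℝ)
    (hS : ∀ i j, S i j = if (i : ℕ) = (j : ℕ) then σ j else 0)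
    (u1 : Fin M → ℝ) (hu1 : u1 = fun i => U i ⟨0, by omega⟩)
    (v1 : Fin N → ℝ) (hv1 : v1 = fun i => V i ⟨0, hN⟩) (z : Fin N → ℝ) :
    (((1 - vecMulVec u1 u1) * (U * S * Vᵀ) * (1 - vecMulVec v1 v1)) *ᵥ z) ⬝ᵥ
    (((1 - vecMulVec u1 u1) * (U * S * Vᵀ) * (1 - vecMulVec v1 v1)) *ᵥ z) ≤ a ^ 2 * (z ⬝ᵥ z) := by
  have hV' : V * Vᵀ = 1 := mul_eq_one_comm.mp hV
  rw [proj_eq U hU _ u1 hu1, proj_eq V hV _ v1 hv1]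
  set D1 := Matrix.diagonal (fun i : Fin M => if i = ⟨0, by omega⟩ then (0 : ℝ) else 1) with hD1
  set D2 := Matrix.diagonal (fun i : Fin N => if i = ⟨0, hN⟩ then (0 : ℝ) else 1) with hD2
  set S' := D1 * S * D2 with hS'
  have e1 : U * D1 * Uᵀ * (U * S * Vᵀ) * (V * D2 * Vᵀ) = U * S' * Vᵀ := by
    calc _ = U * D1 * (Uᵀ * U) * S * (Vᵀ * V) * D2 * Vᵀ := by simp only [Matrix.mul_assoc]
      _ = _ := by rw [hU, hV, hS']; simp only [Matrix.mul_assoc, Matrix.mul_one, Matrix.one_mul]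
  set s : Fin N → ℝ := fun i => if i = ⟨0, hN⟩ then 0 else σ i with hs
  have e2 : ∀ k i, S' k i = if k = Fin.castLE hMN i then s i else 0 := by
    intro k i
    rw [hS', hD1, hD2, Matrix.mul_diagonal, Matrix.diagonal_mul, hS]
    simp only [hs, Fin.ext_iff, Fin.val_castLE]
    split_ifs <;> first | omega | simp
  have e3 : S'ᵀ * S' = Matrix.diagonal (fun i => s i ^ 2) := by
    ext i j
    simp only [Matrix.mul_apply, Matrix.transpose_apply, e2, Matrix.diagonal_apply]
    by_cases hij : i = j
    · subst hij; simp [sq]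
    · simp [hij, Ne.symm hij, Fin.castLE_inj]
  rw [e1]
  have e4 : ((U * S' * Vᵀ) *ᵥ z) ⬝ᵥ ((U * S' * Vᵀ) *ᵥ z) = (Vᵀ *ᵥ z) ⬝ᵥ ((S'ᵀ * S') *ᵥ (Vᵀ *ᵥ z)) := by
    rw [Matrix.dotProduct_mulVec, ← Matrix.mulVec_transpose, Matrix.mulVec_mulVec, dotProduct_comm]
    conv_rhs => rw [dotProduct_comm, Matrix.dotProduct_mulVec, ← Matrix.mulVec_transpose,
      Matrix.mulVec_mulVec, Matrix.mulVec_mulVec, dotProduct_comm]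
    congr 2
    simp only [Matrix.transpose_mul, Matrix.transpose_transpose]
    calc _ = V * (S'ᵀ * (Uᵀ * U) * S') * Vᵀ := by simp only [Matrix.mul_assoc]
      _ = _ := by rw [hU]; simp only [Matrix.mul_assoc, Matrix.mul_one, Matrix.one_mul]
  have e5 : z ⬝ᵥ z = (Vᵀ *ᵥ z) ⬝ᵥ (Vᵀ *ᵥ z) := by
    rw [Matrix.dotProduct_mulVec, ← Matrix.mulVec_transpose, Matrix.mulVec_mulVec,
      Matrix.transpose_transpose, hV', Matrix.one_mulVec]
  rw [e4, e5, e3]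
  simp only [dotProduct, Matrix.mulVec_diagonal, Finset.mul_sum]
  refine Finset.sum_le_sum fun i _ => ?_
  have hsi : s i ^ 2 ≤ a ^ 2 := by
    simp only [hs]
    split_ifs with h
    · simp; positivity
    · obtain ⟨h1, h2⟩ := hσ i h
      gcongr
  nlinarith [mul_self_nonneg ((Vᵀ *ᵥ z) i)]

/-- Theorem 3.3(i). MINRES bound for the JDSVD correction equation with
exact singular vectors, in the case `τ > (σ_max + σ_max,2)/2`. -/
theorem minres_bound_exact_largest {M N : ℕ} (hN : 2 ≤ N) (hMN : N ≤ M)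
    (A : Matrix (Fin M) (Fin N) ℝ)
    (U : Matrix (Fin M) (Fin M) ℝ) (V : Matrix (Fin N) (Fin N) ℝ)
    (hU : Uᵀ * U = 1) (hV : Vᵀ * V = 1)
    (σ : Fin N → ℝ) (hσ : ∀ i, 0 ≤ σ i)
    (S : Matrix (Fin M) (Fin N) ℝ)
    (hS : ∀ i j, S i j = if (i : ℕ) = (j : ℕ) then σ j else 0)
    (hA : A = U * S * Vᵀ)
    (τ : ℝ) (hτ0 : 0 ≤ τ)
    (hclosest : ∀ i : Fin N, i ≠ ⟨0, by omega⟩ → |σ ⟨0, by omega⟩ - τ| < |σ i - τ|)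
    (σmax σmax2 : ℝ)
    (hσmax : IsGreatest (Set.range σ) σmax)
    (hσmax2 : IsGreatest (σ '' {i : Fin N | i ≠ ⟨0, by omega⟩}) σmax2)
    (hτ : (σmax + σmax2) / 2 < τ)
    (u1 : Fin M → ℝ) (hu1 : u1 = fun i => U i ⟨0, by omega⟩)
    (v1 : Fin N → ℝ) (hv1 : v1 = fun i => V i ⟨0, by omega⟩)
    (B P B1 : Matrix (Fin M ⊕ Fin N) (Fin M ⊕ Fin N) ℝ)
    (hB : B = Matrix.fromBlocks ((-τ) • 1) A Aᵀ ((-τ) • 1))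
    (hP : P = Matrix.fromBlocks (1 - vecMulVec u1 u1) 0 0 (1 - vecMulVec v1 v1))
    (hB1 : B1 = P * B * P)
    (r : Fin M ⊕ Fin N → ℝ) (hr : P *ᵥ r = r) :
    σ ⟨0, by omega⟩ = σmax ∧
    ∀ j : ℕ, ∃ w ∈ Krylov B1 r j,
      vnorm (B1 *ᵥ w + r) ≤
        2 * (1 - 2 / (1 + Real.sqrt ((τ + σmax2) / (τ - σmax2)))) ^ j * vnorm r := by
  have hN0 : 0 < N := by omega
  set i0 : Fin N := ⟨0, by omega⟩ with hi0
  obtain ⟨⟨k, hk0, hk⟩, hle2⟩ := hσmax2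
  obtain ⟨⟨k', hk'⟩, hle⟩ := hσmax
  have hle' : ∀ i, σ i ≤ σmax := fun i => hle ⟨i, rfl⟩
  have hle2' : ∀ i, i ≠ i0 → σ i ≤ σmax2 := fun i hi => hle2 ⟨i, hi, rfl⟩
  have h21 : σmax2 ≤ σmax := hk ▸ hle' k
  have ha : 0 ≤ σmax2 := hk ▸ hσ k
  have haτ : σmax2 < τ := by linarith
  refine ⟨?_, ?_⟩
  · by_contra hne
    have hk'0 : k' ≠ i0 := by
      rintro rfl; exact hne hk'
    have h1 := hle2' k' hk'0
    have h2 := hclosest k' hk'0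
    have h3 := hle' i0
    rw [abs_of_nonpos (by linarith), abs_of_nonpos (by linarith)] at h2
    linarith
  intro j
  obtain ⟨q, hq1, hq2, hq3⟩ := poly_bound σmax2 τ ha haτ j
  obtain ⟨w, hw, hw2⟩ := krylov_poly B1 r j (q.comp (Polynomial.X + Polynomial.C τ))
    (by rw [Polynomial.natDegree_comp, Polynomial.natDegree_X_add_C, mul_one]; exact hq1)
    (by simp [hq2])
  refine ⟨w, hw, ?_⟩
  rw [hw2]
  set A' := (1 - vecMulVec u1 u1) * A * (1 - vecMulVec v1 v1) with hA'
  set H : Matrix (Fin M ⊕ Fin N) (Fin M ⊕ Fin N) ℝ := Matrix.fromBlocks 0 A' A'ᵀ 0 with hH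
  have hPP : P * P = P := by
    rw [hP, Matrix.fromBlocks_multiply]
    simp only [Matrix.mul_zero, Matrix.zero_mul, add_zero, zero_add]
    rw [proj_idem U hU _ u1 hu1, proj_idem V hV _ v1 hv1]
  have hHG : H = P * Matrix.fromBlocks 0 A Aᵀ 0 * P := by
    rw [hP, Matrix.fromBlocks_multiply, Matrix.fromBlocks_multiply, hH, hA']
    simp [Matrix.transpose_mul, Matrix.mul_assoc, transpose_vecMulVec]
  have hBG : B = Matrix.fromBlocks 0 A Aᵀ 0 - τ • 1 := by
    rw [hB, ← Matrix.fromBlocks_one, Matrix.fromBlocks_smul, sub_eq_add_neg, Matrix.fromBlocks_neg,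
      Matrix.fromBlocks_add]
    simp
  have hHP : H * P = H := by rw [hHG, Matrix.mul_assoc, hPP]
  have hPH : P * H = H := by rw [hHG, ← Matrix.mul_assoc, ← Matrix.mul_assoc, hPP]
  have hB1' : B1 = H - τ • P := by
    rw [hB1, hBG, mul_sub, sub_mul, ← hHG]; simp [hPP]
  have hpow : ∀ n : ℕ, (B1 ^ n) *ᵥ r = ((H - τ • (1 : Matrix _ _ ℝ)) ^ n) *ᵥ r ∧
      P *ᵥ ((B1 ^ n) *ᵥ r) = (B1 ^ n) *ᵥ r := by
    intro n
    induction n with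
    | zero => simp [hr]
    | succ n ih =>
      obtain ⟨ih1, ih2⟩ := ih
      have hPB : P * B1 = B1 := by rw [hB1', mul_sub, hPH]; simp [hPP]
      constructor
      · rw [pow_succ', pow_succ', ← Matrix.mulVec_mulVec, ← Matrix.mulVec_mulVec, ← ih1, hB1',
          Matrix.sub_mulVec, Matrix.sub_mulVec, Matrix.smul_mulVec, Matrix.smul_mulVec, ← hB1', ih2,
          Matrix.one_mulVec]
      · rw [pow_succ', ← Matrix.mulVec_mulVec, Matrix.mulVec_mulVec, hPB]
  have hae : (Polynomial.aeval B1 (q.comp (Polynomial.X + Polynomial.C τ))) *ᵥ r =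
      (Polynomial.aeval H q) *ᵥ r := by
    have h1 : Polynomial.aeval H q = Polynomial.aeval (H - τ • (1 : Matrix _ _ ℝ))
        (q.comp (Polynomial.X + Polynomial.C τ)) := by
      rw [Polynomial.aeval_comp]
      simp [Algebra.algebraMap_eq_smul_one]
    rw [h1, Polynomial.aeval_eq_sum_range, Polynomial.aeval_eq_sum_range, Matrix.sum_mulVec,
      Matrix.sum_mulVec]
    refine Finset.sum_congr rfl fun n _ => ?_
    rw [Matrix.smul_mulVec, Matrix.smul_mulVec, (hpow n).1]
  rw [hae]
  have hHh : H.IsHermitian := by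
    rw [Matrix.IsHermitian, Matrix.conjTranspose_eq_transpose_of_trivial, hH,
      Matrix.fromBlocks_transpose]
    simp
  refine spectral_bound H hHh q _ ((abs_nonneg _).trans (hq3 0 (by simpa using ha))) ?_ r
  intro l x hx hlx
  refine hq3 l (block_eig A' σmax2 ha ?_ l x hx hlx)
  intro z
  rw [hA', hA]
  exact svd_bound hN0 hMN U V hU hV σ σmax2 (fun i hi => ⟨hσ i, hle2' i hi⟩) S hS u1 hu1 v1 hv1 z
end

section
/- Assume 0 < τ, σ_min ≤ τ < (σ_min + σ_min,2)/2, and let r ∈ ℝ^{M+N} satisfy Π r = r. Set j₀ = min{1, M−N}. Then σ₁ = σ_min, and for every j ≥ j₀ there exists w ∈ K_j(B₁, r) such that ‖B₁ w + r‖ ≤ 2 · (σ_max/τ)^{j₀} · (1 − 2/(1 + √((σ_max² − τ²)/(σ_min,2² − τ²))))^{⌊(j−j₀)/2⌋} · ‖r‖, where ⌊·⌋ denotes the integer part. -/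
open Matrix

lemma cheb_aux (a b : ℝ) (ha : 0 < a) (hab : a ≤ b) (k : ℕ) :
    ∃ p : Polynomial ℝ, p.natDegree ≤ k ∧ p.eval 0 = 1 ∧
      ∀ x, a ≤ x → x ≤ b → |p.eval x| ≤ 2 * (1 - 2 / (1 + Real.sqrt (b / a))) ^ k := by
  rcases hab.eq_or_lt with h | h
  · subst h
    refine ⟨(1 - Polynomial.C a⁻¹ * Polynomial.X) ^ k, ?_, by simp, ?_⟩
    · refine Polynomial.natDegree_pow_le.trans ?_
      have : (1 - Polynomial.C a⁻¹ * Polynomial.X : Polynomial ℝ).natDegree ≤ 1 := by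
        compute_degree
      nlinarith
    · intro x h1 h2
      obtain rfl : x = a := le_antisymm h2 h1
      have h0 : (1 - x⁻¹ * x : ℝ) = 0 := by rw [inv_mul_cancel₀ ha.ne']; ring
      have h3 : (1 - 2 / (1 + Real.sqrt (x / x)) : ℝ) = 0 := by
        rw [div_self ha.ne']; norm_num
      rw [h3]
      simp only [Polynomial.eval_pow, Polynomial.eval_sub, Polynomial.eval_one,
        Polynomial.eval_mul, Polynomial.eval_C, Polynomial.eval_X, h0]
      have : (0 : ℝ) ≤ 0 ^ k := pow_nonneg le_rfl k
      rw [abs_of_nonneg this]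
      linarith
  · set s := Real.sqrt (b / a) with hs
    have hb0 : 0 < b := by linarith
    have hs2 : s ^ 2 = b / a := Real.sq_sqrt (by positivity)
    have hs1 : 1 < s := by
      rw [hs, Real.lt_sqrt (by norm_num)]
      rw [lt_div_iff₀ ha]; linarith
    have hb : b = s ^ 2 * a := by rw [hs2]; field_simp
    set ρ := 1 - 2 / (1 + s) with hρ
    have hρ' : ρ = (s - 1) / (s + 1) := by rw [hρ]; field_simp; ring
    have hρ0 : 0 < ρ := by rw [hρ']; apply div_pos <;> linarith
    set θ := - Real.log ρ with hθ
    have hc : Real.cosh θ = (b + a) / (b - a) := by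
      rw [Real.cosh_eq, hθ, neg_neg, Real.exp_neg, Real.exp_log hρ0, hρ', hb]
      have h1 : s - 1 ≠ 0 := by linarith
      have h2 : s + 1 ≠ 0 := by linarith
      have h3 : s ^ 2 * a - a = (s - 1) * (s + 1) * a := by ring
      rw [h3]
      field_simp
      ring
    have hck : (ρ ^ k)⁻¹ / 2 ≤ Real.cosh (k * θ) := by
      rw [Real.cosh_eq]
      have : Real.exp (k * θ) = (ρ ^ k)⁻¹ := by
        rw [Real.exp_nat_mul, hθ, Real.exp_neg, Real.exp_log hρ0, inv_pow]
      rw [this]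
      have := Real.exp_pos (-(k * θ))
      linarith
    have hcp := Real.cosh_pos (k * θ)
    set q : Polynomial ℝ := Polynomial.C ((b + a) / (b - a)) - Polynomial.C (2 / (b - a)) * Polynomial.X with hq
    refine ⟨Polynomial.C (Real.cosh (k * θ))⁻¹ * (Polynomial.Chebyshev.T ℝ k).comp q, ?_, ?_, ?_⟩
    · refine (Polynomial.natDegree_C_mul_le _ _).trans ?_
      refine Polynomial.natDegree_comp_le.trans ?_
      have : q.natDegree ≤ 1 := by rw [hq]; compute_degree
      rw [Polynomial.Chebyshev.natDegree_T, Int.natAbs_natCast]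
      nlinarith
    · rw [Polynomial.eval_mul, Polynomial.eval_comp, hq]
      simp only [Polynomial.eval_sub, Polynomial.eval_C, Polynomial.eval_mul, Polynomial.eval_X,
        mul_zero, sub_zero]
      rw [← hc, Polynomial.Chebyshev.T_real_cosh]
      push_cast
      field_simp
    · intro x h1 h2
      rw [Polynomial.eval_mul, Polynomial.eval_comp, Polynomial.eval_C, abs_mul]
      have hx : |q.eval x| ≤ 1 := by
        rw [hq]
        simp only [Polynomial.eval_sub, Polynomial.eval_C, Polynomial.eval_mul, Polynomial.eval_X]
        have h3 : 0 < b - a := by linarith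
        have h4 : (b + a) / (b - a) - 2 / (b - a) * x = (b + a - 2 * x) / (b - a) := by
          field_simp
        rw [h4, abs_le, le_div_iff₀ h3, div_le_iff₀ h3]
        constructor <;> linarith
      have hT := Polynomial.Chebyshev.abs_eval_T_real_le_one (k : ℤ) hx
      rw [abs_of_pos (by positivity)]
      have hρk : 0 < ρ ^ k := by positivity
      have h5 : (Real.cosh (k * θ))⁻¹ ≤ 2 * ρ ^ k := by
        rw [inv_le_comm₀ hcp (by positivity)]
        rw [mul_inv]; linarith
      calc _ ≤ (Real.cosh (k * θ))⁻¹ * 1 := by gcongr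
        _ ≤ _ := by linarith

lemma spectral_aux {ι : Type*} [Fintype ι] [DecidableEq ι] (H : Matrix ι ι ℝ) (hH : Hᵀ = H)
    (p : Polynomial ℝ) (r : ι → ℝ) (c : ℝ) (hc : 0 ≤ c)
    (h : ∀ (l : ℝ) (x : ι → ℝ), H *ᵥ x = l • x → x ⬝ᵥ r ≠ 0 → |p.eval l| ≤ c) :
    vnorm ((Polynomial.aeval H p) *ᵥ r) ≤ c * vnorm r := by
  have hH' : H.IsHermitian := by
    rw [Matrix.IsHermitian, Matrix.conjTranspose_eq_transpose_of_trivial, hH]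
  have key : ∀ (l : ℝ) (x : ι → ℝ), H *ᵥ x = l • x →
      x ⬝ᵥ ((Polynomial.aeval H p) *ᵥ r) = p.eval l * (x ⬝ᵥ r) := by
    intro l x hx
    have hpow : ∀ n : ℕ, x ⬝ᵥ ((H ^ n) *ᵥ r) = l ^ n * (x ⬝ᵥ r) := by
      intro n
      induction n with
      | zero => simp
      | succ n ih =>
        rw [pow_succ', ← Matrix.mulVec_mulVec, Matrix.dotProduct_mulVec, ← Matrix.mulVec_transpose,
          hH, hx, smul_dotProduct, ih, smul_eq_mul]
        ring
    clear h
    induction p using Polynomial.induction_on' with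
    | add p q hp hq =>
      rw [map_add, Matrix.add_mulVec, dotProduct_add, hp, hq, Polynomial.eval_add]
      ring
    | monomial n a =>
      rw [Polynomial.aeval_monomial, Polynomial.eval_monomial, ← Algebra.smul_def,
        Matrix.smul_mulVec, dotProduct_smul, hpow, smul_eq_mul]
      ring
  have hin : ∀ (i : ι) (y : ι → ℝ),
      inner ℝ (hH'.eigenvectorBasis i) (WithLp.toLp 2 y) = ⇑(hH'.eigenvectorBasis i) ⬝ᵥ y := by
    intro i y
    simp [PiLp.inner_apply, dotProduct, mul_comm]
  rw [vnorm_eq, vnorm_eq]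
  refine (sq_le_sq₀ (by positivity) (by positivity)).mp ?_
  rw [mul_pow, ← hH'.eigenvectorBasis.sum_sq_norm_inner_right,
    ← hH'.eigenvectorBasis.sum_sq_norm_inner_right, Finset.mul_sum]
  refine Finset.sum_le_sum fun i _ => ?_
  rw [hin, hin, key _ _ (hH'.mulVec_eigenvectorBasis i), norm_mul, mul_pow]
  by_cases h0 : ⇑(hH'.eigenvectorBasis i) ⬝ᵥ r = 0
  · rw [h0]; simp
  · have := h _ _ (hH'.mulVec_eigenvectorBasis i) h0
    rw [Real.norm_eq_abs]
    gcongr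

lemma krylov_aux {ι : Type*} [Fintype ι] [DecidableEq ι] (H : Matrix ι ι ℝ) (r : ι → ℝ) (j : ℕ)
    (p : Polynomial ℝ) (hp : p.natDegree ≤ j) (hp0 : p.eval 0 = 1) :
    ∃ w ∈ Krylov H r j, H *ᵥ w + r = (Polynomial.aeval H p) *ᵥ r := by
  refine ⟨(Polynomial.aeval H p.divX) *ᵥ r, ?_, ?_⟩
  · have hd : p.divX.degree < j := by
      rw [Polynomial.degree_lt_iff_coeff_zero]
      intro m hm
      rw [Polynomial.coeff_divX]
      exact Polynomial.coeff_eq_zero_of_natDegree_lt (by omega)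
    rw [Polynomial.aeval_eq_sum_range' (n := j + 1)
      (by rw [Polynomial.natDegree_divX_eq_natDegree_tsub_one]; omega), Matrix.sum_mulVec]
    refine Submodule.sum_mem _ fun i hi => ?_
    rw [Matrix.smul_mulVec]
    by_cases hij : i < j
    · exact Submodule.smul_mem _ _ (Submodule.subset_span ⟨i, hij, rfl⟩)
    · rw [Polynomial.degree_lt_iff_coeff_zero] at hd
      rw [hd i (by omega), zero_smul]
      exact Submodule.zero_mem _
  · conv_rhs => rw [← Polynomial.X_mul_divX_add p]
    rw [map_add, map_mul, Polynomial.aeval_X, Polynomial.aeval_C, Polynomial.coeff_zero_eq_eval_zero,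
      hp0, map_one, Matrix.add_mulVec, Matrix.one_mulVec, Matrix.mulVec_mulVec]

lemma eig_aux {M N : ℕ} (hN0 : 0 < N) (hM0 : 0 < M) (hMN : N ≤ M)
    (A : Matrix (Fin M) (Fin N) ℝ)
    (U : Matrix (Fin M) (Fin M) ℝ) (V : Matrix (Fin N) (Fin N) ℝ)
    (hU : Uᵀ * U = 1) (hV : Vᵀ * V = 1)
    (σ : Fin N → ℝ)
    (S : Matrix (Fin M) (Fin N) ℝ)
    (hS : ∀ i j, S i j = if (i : ℕ) = (j : ℕ) then σ j else 0)
    (hA : A = U * S * Vᵀ) (μ : ℝ) (a : Fin M → ℝ) (b : Fin N → ℝ)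
    (h1 : A *ᵥ b = μ • a) (h2 : Aᵀ *ᵥ a = μ • b)
    (ha : (Uᵀ *ᵥ a) ⟨0, hM0⟩ = 0) (hb : (Vᵀ *ᵥ b) ⟨0, hN0⟩ = 0)
    (hne : ¬ (a = 0 ∧ b = 0)) :
    (∃ i : Fin N, i ≠ ⟨0, hN0⟩ ∧ μ ^ 2 = σ i ^ 2) ∨ (μ = 0 ∧ N < M) := by
  by_contra hcon
  push Not at hcon
  obtain ⟨hc1, hc2⟩ := hcon
  have hU' : U * Uᵀ = 1 := mul_eq_one_comm.mp hU
  have hV' : V * Vᵀ = 1 := mul_eq_one_comm.mp hV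
  have e1 : S *ᵥ (Vᵀ *ᵥ b) = μ • (Uᵀ *ᵥ a) := by
    rw [← Matrix.mulVec_smul, ← h1, hA]
    simp only [Matrix.mulVec_mulVec, ← Matrix.mul_assoc, hU, Matrix.one_mul]
  have e2 : Sᵀ *ᵥ (Uᵀ *ᵥ a) = μ • (Vᵀ *ᵥ b) := by
    rw [← Matrix.mulVec_smul, ← h2, hA]
    simp only [Matrix.mulVec_mulVec, Matrix.transpose_mul, Matrix.transpose_transpose,
      ← Matrix.mul_assoc, hV, Matrix.one_mul]
  set a' := Uᵀ *ᵥ a with ha'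
  set b' := Vᵀ *ᵥ b with hb'
  have f1 : ∀ i : Fin N, σ i * b' i = μ * a' ⟨i, by omega⟩ := by
    intro i
    have := congrFun e1 ⟨i, by omega⟩
    simpa [Matrix.mulVec, dotProduct, hS, Fin.val_inj] using this
  have f2 : ∀ i : Fin N, σ i * a' ⟨i, by omega⟩ = μ * b' i := by
    intro i
    have := congrFun e2 i
    have h3 : ∀ x : Fin M, ((x : ℕ) = (i : ℕ)) = (x = ⟨i, by omega⟩) := by
      intro x; simp [Fin.ext_iff]
    simpa [Matrix.mulVec, dotProduct, hS, h3] using this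
  have f3 : ∀ i : Fin M, N ≤ i → μ * a' i = 0 := by
    intro i hi
    have := congrFun e1 i
    have h3 : ∀ x : Fin N, ¬ ((i : ℕ) = (x : ℕ)) := by
      intro x; omega
    simpa [Matrix.mulVec, dotProduct, hS, h3] using this.symm
  have g : ∀ i : Fin N, a' ⟨i, by omega⟩ = 0 ∧ b' i = 0 := by
    intro i
    by_cases hi : i = ⟨0, hN0⟩
    · subst hi; exact ⟨ha, hb⟩
    · have hd := sub_ne_zero.mpr (hc1 i hi)
      constructor
      · apply (mul_eq_zero.mp _).resolve_left hd
        linear_combination (-μ) * f1 i - σ i * f2 i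
      · apply (mul_eq_zero.mp _).resolve_left hd
        linear_combination (-μ) * f2 i - σ i * f1 i
  apply hne
  have ha0 : a' = 0 := by
    funext i
    by_cases hi : (i : ℕ) < N
    · exact (g ⟨i, hi⟩).1
    · refine (mul_eq_zero.mp (f3 i (by omega))).resolve_left fun hm => ?_
      have := hc2 hm
      omega
  have hb0 : b' = 0 := funext fun i => (g i).2
  constructor
  · have : U *ᵥ a' = a := by rw [ha', Matrix.mulVec_mulVec, hU', Matrix.one_mulVec]
    rw [← this, ha0, Matrix.mulVec_zero]
  · have : V *ᵥ b' = b := by rw [hb', Matrix.mulVec_mulVec, hV', Matrix.one_mulVec]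
    rw [← this, hb0, Matrix.mulVec_zero]

lemma proj_aux {n : ℕ} (u x : Fin n → ℝ) (hu : u ⬝ᵥ u = 1) (h : (1 - vecMulVec u u) *ᵥ x = x) :
    u ⬝ᵥ x = 0 := by
  have := congrArg (fun z => u ⬝ᵥ z) h
  simp only [Matrix.sub_mulVec, Matrix.one_mulVec, Matrix.vecMulVec_mulVec, dotProduct_sub] at this
  simp [dotProduct_smul, hu] at this
  exact this.symm

lemma proj_aux2 {n : ℕ} (u x : Fin n → ℝ) (h : u ⬝ᵥ x = 0) :
    (1 - vecMulVec u u) *ᵥ x = x := by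
  simp [Matrix.sub_mulVec, Matrix.one_mulVec, Matrix.vecMulVec_mulVec, h]

lemma proj_idem_s5 {n : ℕ} (u : Fin n → ℝ) (hu : u ⬝ᵥ u = 1) :
    (1 - vecMulVec u u) * (1 - vecMulVec u u) = 1 - vecMulVec u u := by
  have : vecMulVec u u * vecMulVec u u = vecMulVec u u := by
    rw [Matrix.vecMulVec_mul_vecMulVec, hu]; simp
  rw [Matrix.sub_mul, Matrix.mul_sub, Matrix.mul_sub, this]; simp

lemma proj_symm {n : ℕ} (u : Fin n → ℝ) :
    (1 - vecMulVec u u)ᵀ = 1 - vecMulVec u u := by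
  rw [Matrix.transpose_sub, Matrix.transpose_vecMulVec, Matrix.transpose_one]

lemma col_unit {n : ℕ} (U : Matrix (Fin n) (Fin n) ℝ) (hU : Uᵀ * U = 1) (k : Fin n) :
    (fun i => U i k) ⬝ᵥ (fun i => U i k) = 1 := by
  have := congrFun (congrFun hU k) k
  simpa [Matrix.mul_apply, dotProduct] using this

lemma eigB_aux {M N : ℕ} (hN0 : 0 < N) (hM0 : 0 < M) (hMN : N ≤ M)
    (A : Matrix (Fin M) (Fin N) ℝ)
    (U : Matrix (Fin M) (Fin M) ℝ) (V : Matrix (Fin N) (Fin N) ℝ)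
    (hU : Uᵀ * U = 1) (hV : Vᵀ * V = 1)
    (σ : Fin N → ℝ)
    (S : Matrix (Fin M) (Fin N) ℝ)
    (hS : ∀ i j, S i j = if (i : ℕ) = (j : ℕ) then σ j else 0)
    (hA : A = U * S * Vᵀ)
    (τ : ℝ)
    (u1 : Fin M → ℝ) (hu1 : u1 = fun i => U i ⟨0, hM0⟩)
    (v1 : Fin N → ℝ) (hv1 : v1 = fun i => V i ⟨0, hN0⟩)
    (B P B1 : Matrix (Fin M ⊕ Fin N) (Fin M ⊕ Fin N) ℝ)
    (hB : B = Matrix.fromBlocks ((-τ) • 1) A Aᵀ ((-τ) • 1))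
    (hP : P = Matrix.fromBlocks (1 - vecMulVec u1 u1) 0 0 (1 - vecMulVec v1 v1))
    (hB1 : B1 = P * B * P)
    (r : Fin M ⊕ Fin N → ℝ) (hr : P *ᵥ r = r) :
    B1ᵀ = B1 ∧ ∀ (l : ℝ) (x : Fin M ⊕ Fin N → ℝ), B1 *ᵥ x = l • x → x ⬝ᵥ r ≠ 0 →
      (∃ i : Fin N, i ≠ ⟨0, hN0⟩ ∧ (l + τ) ^ 2 = σ i ^ 2) ∨ (l + τ = 0 ∧ N < M) := by
  have huu : u1 ⬝ᵥ u1 = 1 := by rw [hu1]; exact col_unit U hU _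
  have hvv : v1 ⬝ᵥ v1 = 1 := by rw [hv1]; exact col_unit V hV _
  have hPt : Pᵀ = P := by
    rw [hP, Matrix.fromBlocks_transpose, proj_symm, proj_symm]; simp
  have hBt : Bᵀ = B := by
    rw [hB, Matrix.fromBlocks_transpose]; simp
  have hPP : P * P = P := by
    rw [hP, Matrix.fromBlocks_multiply]
    simp [proj_idem_s5, huu, hvv]
  refine ⟨by rw [hB1, Matrix.transpose_mul, Matrix.transpose_mul, hPt, hBt, Matrix.mul_assoc], ?_⟩
  intro l x hx hxr
  set y := P *ᵥ x with hy
  have hy0 : y ≠ 0 := by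
    intro h0
    apply hxr
    rw [← hr, Matrix.dotProduct_mulVec, ← Matrix.mulVec_transpose, hPt, ← hy, h0, zero_dotProduct]
  have hPy : P *ᵥ y = y := by rw [hy, Matrix.mulVec_mulVec, hPP]
  have hBy : P *ᵥ (B *ᵥ y) = l • y := by
    rw [hy, ← Matrix.mulVec_smul, ← hx, hB1]
    simp only [Matrix.mulVec_mulVec, ← Matrix.mul_assoc, hPP]
  clear_value y
  obtain ⟨a, b, rfl⟩ : ∃ a b, y = Sum.elim a b := ⟨y ∘ Sum.inl, y ∘ Sum.inr, by simp⟩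
  have hsum : ∀ (a a' : Fin M → ℝ) (b b' : Fin N → ℝ), Sum.elim a b = Sum.elim a' b' →
      a = a' ∧ b = b' := by
    intro a a' b b' h
    exact ⟨by simpa using congrArg (· ∘ Sum.inl) h, by simpa using congrArg (· ∘ Sum.inr) h⟩
  rw [hP, Matrix.fromBlocks_mulVec] at hPy
  obtain ⟨p1, p2⟩ := hsum _ _ _ _ hPy
  simp only [Sum.elim_comp_inl, Sum.elim_comp_inr, Matrix.zero_mulVec, add_zero, zero_add] at p1 p2
  have ha := proj_aux u1 a huu p1
  have hb := proj_aux v1 b hvv p2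
  have hAu : Aᵀ *ᵥ u1 = σ ⟨0, hN0⟩ • v1 := by
    have h1 : u1 = U *ᵥ Pi.single ⟨0, hM0⟩ 1 := by
      rw [hu1]; ext i; simp
    have h2 : v1 = V *ᵥ Pi.single ⟨0, hN0⟩ 1 := by
      rw [hv1]; ext i; simp
    have h3 : Sᵀ *ᵥ Pi.single (⟨0, hM0⟩ : Fin M) 1
        = σ ⟨0, hN0⟩ • Pi.single (⟨0, hN0⟩ : Fin N) (1 : ℝ) := by
      ext i
      by_cases hi : i = ⟨0, hN0⟩
      · subst hi; simp [hS]
      · have hi' : ¬ (0 = (i : ℕ)) := fun h => hi (Fin.ext h.symm)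
        simp [hS, hi, hi']
    rw [h2, ← Matrix.mulVec_smul, ← h3, h1, hA]
    simp only [Matrix.mulVec_mulVec, Matrix.transpose_mul, Matrix.transpose_transpose,
      Matrix.mul_assoc, hU, Matrix.mul_one]
  have hAv : A *ᵥ v1 = σ ⟨0, hN0⟩ • u1 := by
    have h1 : u1 = U *ᵥ Pi.single ⟨0, hM0⟩ 1 := by
      rw [hu1]; ext i; simp
    have h2 : v1 = V *ᵥ Pi.single ⟨0, hN0⟩ 1 := by
      rw [hv1]; ext i; simp
    have h3 : S *ᵥ Pi.single (⟨0, hN0⟩ : Fin N) 1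
        = σ ⟨0, hN0⟩ • Pi.single (⟨0, hM0⟩ : Fin M) (1 : ℝ) := by
      ext i
      by_cases hi : i = ⟨0, hM0⟩
      · subst hi; simp [hS]
      · have hi' : ¬ ((i : ℕ) = 0) := fun h => hi (Fin.ext h)
        simp [hS, hi, hi']
    rw [h1, ← Matrix.mulVec_smul, ← h3, h2, hA]
    simp only [Matrix.mulVec_mulVec, Matrix.mul_assoc, hV, Matrix.mul_one]
  have hBB : B *ᵥ Sum.elim a b = Sum.elim (-τ • a + A *ᵥ b) (Aᵀ *ᵥ a + -τ • b) := by
    rw [hB, Matrix.fromBlocks_mulVec]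
    simp [Matrix.smul_mulVec, Matrix.neg_mulVec]
  have o1 : u1 ⬝ᵥ (A *ᵥ b) = 0 := by
    rw [Matrix.dotProduct_mulVec, ← Matrix.mulVec_transpose, hAu, smul_dotProduct, hb, smul_zero]
  have o2 : v1 ⬝ᵥ (Aᵀ *ᵥ a) = 0 := by
    rw [Matrix.dotProduct_mulVec, ← Matrix.mulVec_transpose, Matrix.transpose_transpose, hAv,
      smul_dotProduct, ha, smul_zero]
  have hlab : l • Sum.elim a b = Sum.elim (l • a) (l • b) := by
    ext (i | i) <;> simp
  rw [hBB, hP, Matrix.fromBlocks_mulVec, hlab] at hBy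
  obtain ⟨q1, q2⟩ := hsum _ _ _ _ hBy
  simp only [Sum.elim_comp_inl, Sum.elim_comp_inr, Matrix.zero_mulVec, add_zero, zero_add] at q1 q2
  rw [proj_aux2 _ _ (by rw [dotProduct_add, dotProduct_smul, ha, o1]; simp)] at q1
  rw [proj_aux2 _ _ (by rw [dotProduct_add, dotProduct_smul, hb, o2]; simp)] at q2
  refine eig_aux hN0 hM0 hMN A U V hU hV σ S hS hA (l + τ) a b ?_ ?_ ?_ ?_ ?_
  · rw [add_smul, ← q1, neg_smul]; abel
  · rw [add_smul, ← q2, neg_smul]; abel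
  · rw [hu1] at ha; exact ha
  · rw [hv1] at hb; exact hb
  · rintro ⟨rfl, rfl⟩
    exact hy0 (by ext (i | i) <;> simp)

/-- Theorem 3.3(ii). MINRES bound for the JDSVD correction equation with
exact singular vectors, in the case `σ_min ≤ τ < (σ_min + σ_min,2)/2`. -/
theorem minres_bound_exact_smallest {M N : ℕ} (hN : 2 ≤ N) (hMN : N ≤ M)
    (A : Matrix (Fin M) (Fin N) ℝ)
    (U : Matrix (Fin M) (Fin M) ℝ) (V : Matrix (Fin N) (Fin N) ℝ)
    (hU : Uᵀ * U = 1) (hV : Vᵀ * V = 1)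
    (σ : Fin N → ℝ) (hσ : ∀ i, 0 ≤ σ i)
    (S : Matrix (Fin M) (Fin N) ℝ)
    (hS : ∀ i j, S i j = if (i : ℕ) = (j : ℕ) then σ j else 0)
    (hA : A = U * S * Vᵀ)
    (τ : ℝ) (hτ0 : 0 < τ)
    (hclosest : ∀ i : Fin N, i ≠ ⟨0, by omega⟩ → |σ ⟨0, by omega⟩ - τ| < |σ i - τ|)
    (σmax σmin σmin2 : ℝ)
    (hσmax : IsGreatest (Set.range σ) σmax)
    (hσmin : IsLeast (Set.range σ) σmin)
    (hσmin2 : IsLeast (σ '' {i : Fin N | i ≠ ⟨0, by omega⟩}) σmin2)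
    (hτ1 : σmin ≤ τ) (hτ2 : τ < (σmin + σmin2) / 2)
    (u1 : Fin M → ℝ) (hu1 : u1 = fun i => U i ⟨0, by omega⟩)
    (v1 : Fin N → ℝ) (hv1 : v1 = fun i => V i ⟨0, by omega⟩)
    (B P B1 : Matrix (Fin M ⊕ Fin N) (Fin M ⊕ Fin N) ℝ)
    (hB : B = Matrix.fromBlocks ((-τ) • 1) A Aᵀ ((-τ) • 1))
    (hP : P = Matrix.fromBlocks (1 - vecMulVec u1 u1) 0 0 (1 - vecMulVec v1 v1))
    (hB1 : B1 = P * B * P)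
    (r : Fin M ⊕ Fin N → ℝ) (hr : P *ᵥ r = r) :
    σ ⟨0, by omega⟩ = σmin ∧
    ∀ j : ℕ, min 1 (M - N) ≤ j → ∃ w ∈ Krylov B1 r j,
      vnorm (B1 *ᵥ w + r) ≤
        2 * (σmax / τ) ^ (min 1 (M - N)) *
          (1 - 2 / (1 + Real.sqrt ((σmax ^ 2 - τ ^ 2) / (σmin2 ^ 2 - τ ^ 2)))) ^
            ((j - min 1 (M - N)) / 2) * vnorm r := by
  have h0 : σ ⟨0, by omega⟩ = σmin := by
    obtain ⟨i, hi⟩ := hσmin.1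
    by_cases h : i = ⟨0, by omega⟩
    · rw [← h, hi]
    · have : σmin2 ≤ σ i := hσmin2.2 ⟨i, h, rfl⟩
      linarith
  refine ⟨h0, ?_⟩
  intro j hj
  obtain ⟨hsym, heig⟩ := eigB_aux (by omega) (by omega) hMN A U V hU hV σ S hS hA τ u1 hu1 v1 hv1 B P B1 hB hP hB1 r hr
  have h2 : τ < σmin2 := by linarith
  have h2m : σmin2 ≤ σmax := by
    obtain ⟨i, -, hi⟩ := hσmin2.1
    rw [← hi]; exact hσmax.2 ⟨i, rfl⟩
  have ha : 0 < σmin2 ^ 2 - τ ^ 2 := by nlinarith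
  have hab : σmin2 ^ 2 - τ ^ 2 ≤ σmax ^ 2 - τ ^ 2 := by nlinarith
  set d := min 1 (M - N) with hd
  set k := (j - d) / 2 with hk
  obtain ⟨p, hp1, hp2, hp3⟩ := cheb_aux _ _ ha hab k
  set R := (1 - 2 / (1 + Real.sqrt ((σmax ^ 2 - τ ^ 2) / (σmin2 ^ 2 - τ ^ 2)))) ^ k with hR
  have hR0 : 0 ≤ 2 * R := (abs_nonneg _).trans (hp3 _ le_rfl hab)
  have hst : 0 ≤ σmax / τ := div_nonneg (by linarith) hτ0.le
  set q : Polynomial ℝ := (Polynomial.C τ⁻¹ * (Polynomial.X + Polynomial.C τ)) ^ d *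
    p.comp ((Polynomial.X + Polynomial.C τ) ^ 2 - Polynomial.C (τ ^ 2)) with hq
  have hqe : ∀ l, q.eval l = (τ⁻¹ * (l + τ)) ^ d * p.eval ((l + τ) ^ 2 - τ ^ 2) := by
    intro l; simp [hq, Polynomial.eval_comp]
  have hqd : q.natDegree ≤ j := by
    have e1 : ((Polynomial.C τ⁻¹ * (Polynomial.X + Polynomial.C τ)) ^ d).natDegree ≤ d * 1 := by
      refine Polynomial.natDegree_pow_le.trans (Nat.mul_le_mul_left _ ?_)
      compute_degree
    have e2 : (p.comp ((Polynomial.X + Polynomial.C τ) ^ 2 - Polynomial.C (τ ^ 2))).natDegree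
        ≤ k * 2 := by
      refine Polynomial.natDegree_comp_le.trans (Nat.mul_le_mul hp1 ?_)
      compute_degree
    have := Polynomial.natDegree_mul_le_of_le e1 e2
    rw [← hq] at this
    omega
  have hq0 : q.eval 0 = 1 := by
    rw [hqe]; simp [hp2, hτ0.ne']
  obtain ⟨w, hw, hwe⟩ := krylov_aux B1 r j q hqd hq0
  refine ⟨w, hw, ?_⟩
  rw [hwe]
  have hC : 0 ≤ 2 * (σmax / τ) ^ d * R := by
    have := mul_nonneg hR0 (pow_nonneg hst d)
    linarith
  refine spectral_aux B1 hsym q r _ hC ?_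
  intro l x hx hxr
  rw [hqe]
  rcases heig l x hx hxr with ⟨i, hi, hm⟩ | ⟨hm, hlt⟩
  · have b1 : σmin2 ≤ σ i := hσmin2.2 ⟨i, hi, rfl⟩
    have b2 : σ i ≤ σmax := hσmax.2 ⟨i, rfl⟩
    have hpb := hp3 ((l + τ) ^ 2 - τ ^ 2) (by rw [hm]; nlinarith) (by rw [hm]; nlinarith [hσ i])
    have hab' : |l + τ| ≤ σmax := by
      rw [(sq_eq_sq_iff_abs_eq_abs _ _).mp hm, abs_of_nonneg (hσ i)]; exact b2
    have hfac : |τ⁻¹ * (l + τ)| ≤ σmax / τ := by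
      rw [abs_mul, abs_of_pos (inv_pos.mpr hτ0), div_eq_inv_mul]
      gcongr
    rw [abs_mul, abs_pow]
    calc _ ≤ (σmax / τ) ^ d * (2 * R) := by gcongr
      _ = _ := by ring
  · have : d = 1 := by omega
    rw [hm, this]
    simp only [this] at hC
    simpa using hC
end

section
/- Let ũ₁ ∈ ℝ^M and ṽ₁ ∈ ℝ^N be unit vectors, and let P̃₁ ∈ ℝ^{M×(M−1)} and Q̃₁ ∈ ℝ^{N×(N−1)} be such that [ũ₁, P̃₁] ∈ ℝ^{M×M} and [ṽ₁, Q̃₁] ∈ ℝ^{N×N} are orthogonal matrices. Define B̃₁' = [[−τ I_{M−1}, P̃₁ᵀ A Q̃₁], [Q̃₁ᵀ Aᵀ P̃₁, −τ I_{N−1}]] and B₁' = [[−τ I_{M−1}, Σ₁'], [Σ₁'ᵀ, −τ I_{N−1}]], where Σ₁' ∈ ℝ^{(M−1)×(N−1)} is rectangular diagonal with diagonal entries σ₂, …, σ_N, and set sin φ = ‖P̃₁ᵀ u₁‖ and sin ψ = ‖Q̃₁ᵀ v₁‖. Then there exists an orthogonal matrix Z ∈ ℝ^{(M+N−2)×(M+N−2)}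 such that ‖B̃₁' − Zᵀ B₁' Z‖ ≤ ‖A‖ · (sin φ + sin ψ)². -/
open Matrix

noncomputable def specNorm {ι κ : Type*} [Fintype ι] [Fintype κ] [DecidableEq κ]
    (A : Matrix ι κ ℝ) : ℝ :=
  ‖LinearMap.toContinuousLinearMap (Matrix.toEuclideanLin A)‖

section helpers
open scoped Matrix.Norms.L2Operator

lemma specNorm_eq_aux {ι κ : Type*} [Fintype ι] [Fintype κ] [DecidableEq κ]
    (A : Matrix ι κ ℝ) : specNorm A = ‖A‖ := rfl

lemma norm_tr_aux {ι κ : Type*} [Fintype ι] [Fintype κ] [DecidableEq κ] [DecidableEq ι]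
    (A : Matrix ι κ ℝ) : ‖Aᵀ‖ = ‖A‖ := by
  rw [← conjTranspose_eq_transpose_of_trivial, l2_opNorm_conjTranspose]

lemma norm_sq_aux {ι κ : Type*} [Fintype ι] [Fintype κ] [DecidableEq κ]
    (A : Matrix ι κ ℝ) : ‖A‖ * ‖A‖ = ‖Aᵀ * A‖ := by
  rw [← conjTranspose_eq_transpose_of_trivial, l2_opNorm_conjTranspose_mul_self]

lemma norm_one_aux {κ : Type*} [Fintype κ] [DecidableEq κ] : ‖(1 : Matrix κ κ ℝ)‖ ≤ 1 := by
  rw [← diagonal_one, l2_opNorm_diagonal]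
  refine (pi_norm_le_iff_of_nonneg zero_le_one).2 fun i => by simp

lemma norm_orth_aux {ι κ : Type*} [Fintype ι] [Fintype κ] [DecidableEq κ]
    (A : Matrix ι κ ℝ) (h : Aᵀ * A = 1) : ‖A‖ ≤ 1 := by
  have h1 := norm_sq_aux A
  rw [h] at h1
  have h2 := norm_one_aux (κ := κ)
  nlinarith [norm_nonneg A]

lemma vnorm_aux {ι : Type*} [Fintype ι] (x : ι → ℝ) :
    vnorm x = ‖replicateCol Unit x‖ := by
  have h : (replicateCol Unit x)ᵀ * replicateCol Unit x
      = diagonal (fun _ => ∑ i, x i ^ 2) := by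
    ext i j
    simp [Matrix.mul_apply, pow_two]
  have h1 := norm_sq_aux (replicateCol Unit x)
  rw [h, l2_opNorm_diagonal, pi_norm_const, Real.norm_of_nonneg (by positivity)] at h1
  rw [vnorm, ← h1, Real.sqrt_mul_self (norm_nonneg _)]

lemma norm_block_aux {m n : Type*} [Fintype m] [Fintype n] [DecidableEq m] [DecidableEq n]
    (E : Matrix m n ℝ) : ‖fromBlocks 0 E Eᵀ 0‖ ≤ ‖E‖ := by
  rw [l2_opNorm_def]
  refine ContinuousLinearMap.opNorm_le_bound _ (norm_nonneg _) fun x => ?_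
  refine (sq_le_sq₀ (by positivity) (by positivity)).mp ?_
  have h1 := l2_opNorm_mulVec E (WithLp.toLp 2 fun i => x (Sum.inr i))
  have h2 := l2_opNorm_mulVec Eᵀ (WithLp.toLp 2 fun i => x (Sum.inl i))
  rw [norm_tr_aux] at h2
  have h3 := pow_le_pow_left₀ (norm_nonneg _) h1 2
  have h4 := pow_le_pow_left₀ (norm_nonneg _) h2 2
  rw [mul_pow, EuclideanSpace.norm_sq_eq, EuclideanSpace.norm_sq_eq] at h3 h4
  rw [mul_pow, EuclideanSpace.norm_sq_eq, EuclideanSpace.norm_sq_eq, Fintype.sum_sum_type,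
    Fintype.sum_sum_type]
  have e : ∀ y, (WithLp.ofLp ((toEuclideanLin ≪≫ₗ LinearMap.toContinuousLinearMap)
      (fromBlocks 0 E Eᵀ 0) x)) y = (fromBlocks 0 E Eᵀ 0 *ᵥ x.ofLp) y := fun y => rfl
  simp only [e, fromBlocks_mulVec, Sum.elim_inl, Sum.elim_inr, zero_mulVec, zero_add, add_zero]
  rw [mul_add, add_comm (‖E‖ ^ 2 * _)]
  exact add_le_add h3 h4

lemma polar_aux {n k : Type*} [Fintype n] [Fintype k] [DecidableEq n] [DecidableEq k]
    (u ut : Matrix n Unit ℝ) (P Pt : Matrix n k ℝ)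
    (h3 : u * uᵀ + P * Pᵀ = 1) (hu : uᵀ * u = 1) (hut : utᵀ * ut = 1)
    (t1 : Ptᵀ * Pt = 1) (t2 : Ptᵀ * ut = 0) (t3 : ut * utᵀ + Pt * Ptᵀ = 1) :
    ∃ Z : Matrix k k ℝ, Zᵀ * Z = 1 ∧ ‖Pᵀ * Pt - Z‖ ≤ ‖Ptᵀ * u‖ ^ 2 := by
  obtain ⟨c, hc⟩ : ∃ c : ℝ, uᵀ * ut = c • 1 := ⟨(uᵀ * ut) () (), by ext; simp⟩
  have hc' : utᵀ * u = c • 1 := by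
    have := congrArg transpose hc
    simpa using this
  have hP : P * Pᵀ = 1 - u * uᵀ := by rw [← h3]; abel
  have hPt : Pt * Ptᵀ = 1 - ut * utᵀ := by rw [← t3]; abel
  have t2' : utᵀ * Pt = 0 := by
    have := congrArg transpose t2
    simpa using this
  set a := Ptᵀ * u with ha
  set p := Pᵀ * ut with hp
  set C := Pᵀ * Pt with hC
  have e1 : Cᵀ * C = 1 - a * aᵀ := by
    calc Cᵀ * C = Ptᵀ * (P * Pᵀ) * Pt := by simp [hC, Matrix.mul_assoc]
      _ = Ptᵀ * Pt - a * aᵀ := by rw [hP]; simp [ha, Matrix.mul_sub, Matrix.sub_mul, Matrix.mul_assoc]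
      _ = _ := by rw [t1]
  have e2 : Cᵀ * p = - (c • a) := by
    calc Cᵀ * p = Ptᵀ * (P * Pᵀ) * ut := by simp [hC, hp, Matrix.mul_assoc]
      _ = Ptᵀ * ut - a * (uᵀ * ut) := by
        rw [hP]; simp [ha, Matrix.mul_sub, Matrix.sub_mul, Matrix.mul_assoc]
      _ = _ := by rw [t2, hc]; simp
  have e2' : pᵀ * C = - (c • aᵀ) := by
    have := congrArg transpose e2
    simpa using this
  have e3 : pᵀ * p = (1 - c ^ 2) • 1 := by
    calc pᵀ * p = utᵀ * (P * Pᵀ) * ut := by simp [hp, Matrix.mul_assoc]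
      _ = utᵀ * ut - (utᵀ * u) * (uᵀ * ut) := by
        rw [hP]; simp [Matrix.mul_sub, Matrix.sub_mul, Matrix.mul_assoc]
      _ = _ := by rw [hut, hc, hc']; simp [sub_smul, pow_two, smul_smul]
  have e4 : aᵀ * a = (1 - c ^ 2) • 1 := by
    calc aᵀ * a = uᵀ * (Pt * Ptᵀ) * u := by simp [ha, Matrix.mul_assoc]
      _ = uᵀ * u - (uᵀ * ut) * (utᵀ * u) := by
        rw [hPt]; simp [Matrix.mul_sub, Matrix.sub_mul, Matrix.mul_assoc]
      _ = _ := by rw [hu, hc, hc']; simp [sub_smul, pow_two, smul_smul]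
  have e5 : ‖p‖ = ‖a‖ := by
    have h1 := norm_sq_aux p
    have h2 := norm_sq_aux a
    rw [e3, ← e4, ← h2] at h1
    exact (mul_self_inj (norm_nonneg _) (norm_nonneg _)).1 h1
  obtain ⟨α, hα, hα1⟩ : ∃ α : ℝ, α ^ 2 * (1 - c ^ 2) - 2 * α * c - 1 = 0 ∧ |α| ≤ 1 := by
    rcases le_total 0 c with h | h
    · refine ⟨-(1 / (1 + c)), ?_, ?_⟩
      · field_simp; ring
      · rw [abs_neg, abs_of_nonneg (by positivity), div_le_one (by positivity)]; linarith
    · have : 0 < 1 - c := by linarith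
      refine ⟨1 / (1 - c), ?_, ?_⟩
      · field_simp; ring
      · rw [abs_of_nonneg (by positivity), div_le_one (by positivity)]; linarith
  refine ⟨C + α • (p * aᵀ), ?_, ?_⟩
  · calc (C + α • (p * aᵀ))ᵀ * (C + α • (p * aᵀ))
        = Cᵀ * C + α • ((Cᵀ * p) * aᵀ) + α • (a * (pᵀ * C)) + α ^ 2 • (a * (pᵀ * p) * aᵀ) := by
          simp only [transpose_add, transpose_smul, transpose_mul, transpose_transpose,
            Matrix.add_mul, Matrix.mul_add, Matrix.smul_mul, Matrix.mul_smul, Matrix.mul_assoc,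
            smul_smul, pow_two, smul_add]
          abel
      _ = 1 + (α ^ 2 * (1 - c ^ 2) - 2 * α * c - 1) • (a * aᵀ) := by
          rw [e1, e2, e2', e3]
          simp only [Matrix.neg_mul, Matrix.mul_neg, Matrix.smul_mul, Matrix.mul_smul,
            Matrix.mul_one]
          module
      _ = 1 := by rw [hα]; simp
  · have : C - (C + α • (p * aᵀ)) = -(α • (p * aᵀ)) := by abel
    rw [this, norm_neg, norm_smul, Real.norm_eq_abs]
    have h1 := l2_opNorm_mul p aᵀ
    rw [norm_tr_aux, e5] at h1
    calc |α| * ‖p * aᵀ‖ ≤ 1 * (‖a‖ * ‖a‖) := by gcongr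
      _ = _ := by ring

lemma norm_mul3_aux {m n k l : Type*} [Fintype m] [Fintype n] [Fintype k] [Fintype l]
    [DecidableEq n] [DecidableEq k] [DecidableEq l]
    (X : Matrix m n ℝ) (Y : Matrix n k ℝ) (W : Matrix k l ℝ) :
    ‖X * Y * W‖ ≤ ‖X‖ * ‖Y‖ * ‖W‖ :=
  (l2_opNorm_mul _ _).trans (mul_le_mul_of_nonneg_right (l2_opNorm_mul _ _) (norm_nonneg _))

lemma core_aux {m n k l : Type*} [Fintype m] [Fintype n] [Fintype k] [Fintype l]
    [DecidableEq m] [DecidableEq n] [DecidableEq k] [DecidableEq l]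
    (A : Matrix m n ℝ) (S1 : Matrix k l ℝ) (s : ℝ)
    (u ut : Matrix m Unit ℝ) (P Pt : Matrix m k ℝ)
    (h3 : u * uᵀ + P * Pᵀ = 1) (hP : Pᵀ * P = 1) (hu : uᵀ * u = 1) (hut : utᵀ * ut = 1)
    (t1 : Ptᵀ * Pt = 1) (t2 : Ptᵀ * ut = 0) (t3 : ut * utᵀ + Pt * Ptᵀ = 1)
    (v vt : Matrix n Unit ℝ) (Q Qt : Matrix n l ℝ)
    (g3 : v * vᵀ + Q * Qᵀ = 1) (hQ : Qᵀ * Q = 1) (hv : vᵀ * v = 1) (hvt : vtᵀ * vt = 1)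
    (r1 : Qtᵀ * Qt = 1) (r2 : Qtᵀ * vt = 0) (r3 : vt * vtᵀ + Qt * Qtᵀ = 1)
    (hs : uᵀ * A * v = s • 1) (hS : Pᵀ * A * Q = S1)
    (hA : A = s • (u * vᵀ) + P * S1 * Qᵀ) (τ : ℝ) :
    ∃ Z : Matrix (k ⊕ l) (k ⊕ l) ℝ, Zᵀ * Z = 1 ∧
      ‖fromBlocks ((-τ) • 1) (Ptᵀ * A * Qt) (Qtᵀ * Aᵀ * Pt) ((-τ) • 1)
        - Zᵀ * fromBlocks ((-τ) • 1) S1 S1ᵀ ((-τ) • 1) * Z‖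
      ≤ ‖A‖ * (‖Ptᵀ * u‖ + ‖Qtᵀ * v‖) ^ 2 := by
  obtain ⟨X, hX, hX'⟩ := polar_aux u ut P Pt h3 hu hut t1 t2 t3
  obtain ⟨Y, hY, hY'⟩ := polar_aux v vt Q Qt g3 hv hvt r1 r2 r3
  have hS1 : ‖S1‖ ≤ ‖A‖ := by
    rw [← hS]
    refine (norm_mul3_aux _ _ _).trans ?_
    rw [norm_tr_aux]
    calc ‖P‖ * ‖A‖ * ‖Q‖ ≤ 1 * ‖A‖ * 1 := by
          gcongr
          · exact norm_orth_aux P hP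
          · exact norm_orth_aux Q hQ
      _ = _ := by ring
  have hsA : ‖uᵀ * A * v‖ ≤ ‖A‖ := by
    refine (norm_mul3_aux _ _ _).trans ?_
    rw [norm_tr_aux]
    calc ‖u‖ * ‖A‖ * ‖v‖ ≤ 1 * ‖A‖ * 1 := by
          gcongr
          · exact norm_orth_aux u hu
          · exact norm_orth_aux v hv
      _ = _ := by ring
  have hD : ‖Qᵀ * Qt‖ ≤ 1 := by
    refine (l2_opNorm_mul _ _).trans ?_
    rw [norm_tr_aux]
    exact mul_le_one₀ (norm_orth_aux Q hQ) (norm_nonneg _) (norm_orth_aux Qt r1)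
  have hE : Ptᵀ * A * Qt - Xᵀ * S1 * Y = (Ptᵀ * u) * (uᵀ * A * v) * (Qtᵀ * v)ᵀ
      + (Pᵀ * Pt - X)ᵀ * S1 * (Qᵀ * Qt) + Xᵀ * S1 * (Qᵀ * Qt - Y) := by
    rw [hs]
    conv_lhs => rw [hA]
    simp only [transpose_sub, transpose_mul, transpose_transpose, Matrix.mul_add, Matrix.add_mul,
      Matrix.mul_sub, Matrix.sub_mul, Matrix.mul_smul, Matrix.smul_mul, Matrix.mul_one,
      Matrix.mul_assoc]
    abel
  have hEn : ‖Ptᵀ * A * Qt - Xᵀ * S1 * Y‖ ≤ ‖A‖ * (‖Ptᵀ * u‖ + ‖Qtᵀ * v‖) ^ 2 := by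
    rw [hE]
    have n1 := norm_mul3_aux (Ptᵀ * u) (uᵀ * A * v) (Qtᵀ * v)ᵀ
    have n2 := norm_mul3_aux (Pᵀ * Pt - X)ᵀ S1 (Qᵀ * Qt)
    have n3 := norm_mul3_aux Xᵀ S1 (Qᵀ * Qt - Y)
    rw [norm_tr_aux] at n1 n2 n3
    have hXn := norm_orth_aux X hX
    calc _ ≤ ‖Ptᵀ * u * (uᵀ * A * v) * (Qtᵀ * v)ᵀ‖ + ‖(Pᵀ * Pt - X)ᵀ * S1 * (Qᵀ * Qt)‖
          + ‖Xᵀ * S1 * (Qᵀ * Qt - Y)‖ := norm_add₃_le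
      _ ≤ ‖Ptᵀ * u‖ * ‖A‖ * ‖Qtᵀ * v‖ + ‖Ptᵀ * u‖ ^ 2 * ‖A‖ * 1 + 1 * ‖A‖ * ‖Qtᵀ * v‖ ^ 2 := by
          refine add_le_add (add_le_add (n1.trans ?_) (n2.trans ?_)) (n3.trans ?_) <;> gcongr
      _ ≤ _ := by
          have : 0 ≤ ‖A‖ * (‖Ptᵀ * u‖ * ‖Qtᵀ * v‖) := by positivity
          nlinarith
  refine ⟨fromBlocks X 0 0 Y, ?_, ?_⟩
  · rw [fromBlocks_transpose, fromBlocks_multiply]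
    simp [hX, hY]
  · have : fromBlocks ((-τ) • 1) (Ptᵀ * A * Qt) (Qtᵀ * Aᵀ * Pt) ((-τ) • 1)
        - (fromBlocks X 0 0 Y)ᵀ * fromBlocks ((-τ) • 1) S1 S1ᵀ ((-τ) • 1) * fromBlocks X 0 0 Y
        = fromBlocks 0 (Ptᵀ * A * Qt - Xᵀ * S1 * Y) (Ptᵀ * A * Qt - Xᵀ * S1 * Y)ᵀ 0 := by
      rw [fromBlocks_transpose, fromBlocks_multiply, fromBlocks_multiply, sub_eq_add_neg, fromBlocks_neg,
        fromBlocks_add]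
      simp [hX, hY, Matrix.mul_assoc, sub_eq_add_neg]
    rw [this]
    exact (norm_block_aux _).trans hEn

lemma col_split_aux {n : ℕ} (U : Matrix (Fin (n+1)) (Fin (n+1)) ℝ) (hU : Uᵀ * U = 1)
    (u : Matrix (Fin (n+1)) Unit ℝ) (hu : u = Matrix.of fun i _ => U i 0)
    (P : Matrix (Fin (n+1)) (Fin n) ℝ) (hP : P = Matrix.of fun i j => U i j.succ) :
    u * uᵀ + P * Pᵀ = 1 ∧ Pᵀ * P = 1 ∧ uᵀ * u = 1 := by
  have hU' : U * Uᵀ = 1 := mul_eq_one_comm.1 hU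
  subst hu hP
  refine ⟨?_, ?_, ?_⟩
  · ext i j
    rw [← hU']
    simp [Matrix.mul_apply, Fin.sum_univ_succ]
  · ext i j
    have := congrFun (congrFun hU i.succ) j.succ
    simpa [Matrix.mul_apply, Matrix.one_apply] using this
  · ext i j
    have := congrFun (congrFun hU 0) 0
    simpa [Matrix.mul_apply, Matrix.one_apply] using this

end helpers

/-- Theorem 3.4. The reduced coefficient matrix `B̃₁'` of the JDSVD
correction equation is orthogonally similar to its exact counterpart `B₁'` up to an error
bounded by `‖A‖ (sin φ + sin ψ)²`. -/
theorem similarity_bound_one {M N : ℕ} (hN : 2 ≤ N) (hMN : N ≤ M)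
    (A : Matrix (Fin M) (Fin N) ℝ)
    (U : Matrix (Fin M) (Fin M) ℝ) (V : Matrix (Fin N) (Fin N) ℝ)
    (hU : Uᵀ * U = 1) (hV : Vᵀ * V = 1)
    (σ : Fin N → ℝ) (hσ : ∀ i, 0 ≤ σ i)
    (S : Matrix (Fin M) (Fin N) ℝ)
    (hS : ∀ i j, S i j = if (i : ℕ) = (j : ℕ) then σ j else 0)
    (hA : A = U * S * Vᵀ)
    (τ : ℝ) (hτ0 : 0 ≤ τ)
    (u1 : Fin M → ℝ) (hu1 : u1 = fun i => U i ⟨0, by omega⟩)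
    (v1 : Fin N → ℝ) (hv1 : v1 = fun i => V i ⟨0, by omega⟩)
    (u1t : Fin M → ℝ) (hu1t : ∑ i, u1t i ^ 2 = 1)
    (v1t : Fin N → ℝ) (hv1t : ∑ i, v1t i ^ 2 = 1)
    (Pt : Matrix (Fin M) (Fin (M - 1)) ℝ)
    (hPt1 : Ptᵀ * Pt = 1) (hPt2 : Ptᵀ *ᵥ u1t = 0)
    (hPt3 : vecMulVec u1t u1t + Pt * Ptᵀ = 1)
    (Qt : Matrix (Fin N) (Fin (N - 1)) ℝ)
    (hQt1 : Qtᵀ * Qt = 1) (hQt2 : Qtᵀ *ᵥ v1t = 0)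
    (hQt3 : vecMulVec v1t v1t + Qt * Qtᵀ = 1)
    (S1 : Matrix (Fin (M - 1)) (Fin (N - 1)) ℝ)
    (hS1 : ∀ i j, S1 i j =
      if (i : ℕ) = (j : ℕ) then σ ⟨(j : ℕ) + 1, by have := j.isLt; omega⟩ else 0)
    (B1t' B1' : Matrix (Fin (M - 1) ⊕ Fin (N - 1)) (Fin (M - 1) ⊕ Fin (N - 1)) ℝ)
    (hB1t' : B1t' = Matrix.fromBlocks ((-τ) • 1) (Ptᵀ * A * Qt) (Qtᵀ * Aᵀ * Pt) ((-τ) • 1))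
    (hB1' : B1' = Matrix.fromBlocks ((-τ) • 1) S1 S1ᵀ ((-τ) • 1)) :
    ∃ Z : Matrix (Fin (M - 1) ⊕ Fin (N - 1)) (Fin (M - 1) ⊕ Fin (N - 1)) ℝ,
      Zᵀ * Z = 1 ∧
      specNorm (B1t' - Zᵀ * B1' * Z) ≤
        specNorm A * (vnorm (Ptᵀ *ᵥ u1) + vnorm (Qtᵀ *ᵥ v1)) ^ 2 := by
  obtain ⟨n, rfl⟩ : ∃ n, N = n + 1 := ⟨N - 1, by omega⟩
  obtain ⟨m, rfl⟩ : ∃ m, M = m + 1 := ⟨M - 1, by omega⟩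
  simp only [specNorm_eq_aux, vnorm_aux]
  change Matrix (Fin (m + 1)) (Fin m) ℝ at Pt
  change Matrix (Fin (n + 1)) (Fin n) ℝ at Qt
  change Matrix (Fin m) (Fin n) ℝ at S1
  change Matrix (Fin m ⊕ Fin n) (Fin m ⊕ Fin n) ℝ at B1t' B1'
  obtain ⟨a3, a1, a0⟩ := col_split_aux U hU _ rfl _ rfl
  obtain ⟨b3, b1, b0⟩ := col_split_aux V hV _ rfl _ rfl
  have hS' : Uᵀ * A * V = S := by
    calc Uᵀ * A * V = (Uᵀ * U) * S * (Vᵀ * V) := by rw [hA]; simp only [Matrix.mul_assoc]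
      _ = S := by rw [hU, hV]; simp
  have key := core_aux A S1 (σ 0) _ (replicateCol Unit u1t) _ Pt a3 a1 a0
    (by ext i j; simpa [Matrix.mul_apply, Matrix.one_apply, pow_two] using hu1t) hPt1
    (by ext i j; simpa [Matrix.mul_apply, mulVec, dotProduct] using congrFun hPt2 i)
    (by
      rw [← hPt3]; ext i j; simp [Matrix.mul_apply, vecMulVec_apply])
    _ (replicateCol Unit v1t) _ Qt b3 b1 b0
    (by ext i j; simpa [Matrix.mul_apply, Matrix.one_apply, pow_two] using hv1t) hQt1
    (by ext i j; simpa [Matrix.mul_apply, mulVec, dotProduct] using congrFun hQt2 i)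
    (by
      rw [← hQt3]; ext i j; simp [Matrix.mul_apply, vecMulVec_apply])
    (by
      ext i j
      have h := congrFun (congrFun hS' 0) 0
      rw [hS] at h
      simpa [Matrix.mul_apply, Matrix.one_apply] using h)
    (by
      ext i j
      have h := congrFun (congrFun hS' i.succ) j.succ
      rw [hS] at h
      rw [hS1]
      simp only [Matrix.mul_apply, transpose_apply, of_apply, Fin.val_succ, add_left_inj] at h ⊢
      exact h)
    (by
      have s00 : S 0 0 = σ 0 := by rw [hS]; simp
      have s01 : ∀ j : Fin n, S 0 j.succ = 0 := fun j => by rw [hS]; simp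
      have s10 : ∀ i : Fin m, S i.succ 0 = 0 := fun i => by rw [hS]; simp
      have s11 : ∀ (i : Fin m) (j : Fin n), S i.succ j.succ = S1 i j := fun i j => by
        rw [hS, hS1]; simp; rfl
      rw [hA]
      ext i j
      simp [Matrix.mul_apply, Fin.sum_univ_succ, s00, s01, s10, s11]
      ring) τ
  obtain ⟨Z, hZ, hZ'⟩ := key
  refine ⟨Z, hZ, ?_⟩
  rw [hB1t', hB1']
  subst hu1 hv1
  exact hZ'
end

section
/- Assume 0 < τ, σ_min ≤ τ < (σ_min + σ_min,2)/2, and δ < σ_min,2 − τ, and let r ∈ ℝ^{M+N} satisfy Π̃ r = r. Set j₀ = min{1, M−N}. Then for every j ≥ j₀ there exists w ∈ K_j(B̃₁, r) such that ‖B̃₁ w + r‖ ≤ 2 · ((σ_max + δ)/τ)^{j₀} · (1 − 2/(1 + √(((σ_max + δ)² − τ²)/((σ_min,2 − δ)² − τ²))))^{⌊(j−j₀)/2⌋} · ‖r‖, where ⌊·⌋ denotes the integer part. -/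
open Matrix

open Polynomial in
theorem aux_dick (d : ℝ) (k : ℕ) : ∃ D : ℝ[X], D.natDegree ≤ k ∧
    (∀ u v : ℝ, u * v = d ^ 2 → D.eval (u + v) = u ^ k + v ^ k) ∧
    (∀ θ : ℝ, D.eval (2 * d * Real.cos θ) = 2 * d ^ k * Real.cos (k * θ)) := by
  induction k using Nat.twoStepInduction with
  | zero =>
    refine ⟨C 2, by simp, ?_, ?_⟩
    · intro u v _; simp; norm_num
    · intro θ; simp
  | one =>
    refine ⟨X, by simp, ?_, ?_⟩
    · intro u v _; simp
    · intro θ; simp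
  | more k h0 h1 =>
    obtain ⟨D0, a0, b0, c0⟩ := h0
    obtain ⟨D1, a1, b1, c1⟩ := h1
    refine ⟨X * D1 - C (d ^ 2) * D0, ?_, ?_, ?_⟩
    · refine (natDegree_sub_le _ _).trans (max_le ?_ ?_)
      · refine natDegree_mul_le.trans ?_
        have := natDegree_X_le (R := ℝ)
        omega
      · refine (natDegree_C_mul_le _ _).trans ?_
        omega
    · intro u v h
      simp only [eval_sub, eval_mul, eval_X, eval_C, b0 u v h, b1 u v h]
      rw [← h]; ring
    · intro θ
      simp only [eval_sub, eval_mul, eval_X, eval_C, c0, c1]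
      have h : Real.cos ((k + 2 : ℕ) * θ) =
          2 * Real.cos θ * Real.cos ((k + 1 : ℕ) * θ) - Real.cos (k * θ) := by
        have e1 : ((k + 2 : ℕ) : ℝ) * θ = (k + 1 : ℕ) * θ + θ := by push_cast; ring
        have e2 : (k : ℝ) * θ = (k + 1 : ℕ) * θ - θ := by push_cast; ring
        rw [e1, e2, Real.cos_add, Real.cos_sub]; ring
      rw [h]; ring

open Polynomial in
theorem aux_cheb (a b τ : ℝ) (hτ : 0 < τ) (ha : τ < a) (hab : a ≤ b) (k : ℕ) :
    ∃ p : ℝ[X], p.natDegree ≤ 2 * k ∧ p.eval 0 = 1 ∧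
      ∀ x : ℝ, a ^ 2 ≤ (x + τ) ^ 2 → (x + τ) ^ 2 ≤ b ^ 2 → |p.eval x| ≤
        2 * (1 - 2 / (1 + Real.sqrt ((b ^ 2 - τ ^ 2) / (a ^ 2 - τ ^ 2)))) ^ k := by
  have hα : 0 < a ^ 2 - τ ^ 2 := by nlinarith
  have hαβ : a ^ 2 - τ ^ 2 ≤ b ^ 2 - τ ^ 2 := by nlinarith
  have hβ : 0 < b ^ 2 - τ ^ 2 := by linarith
  set α := a ^ 2 - τ ^ 2 with hαd
  set β := b ^ 2 - τ ^ 2 with hβd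
  have hsα : 0 < √α := Real.sqrt_pos.2 hα
  have hsβ : 0 < √β := Real.sqrt_pos.2 hβ
  have hss : √α ≤ √β := Real.sqrt_le_sqrt hαβ
  have eα : √α ^ 2 = α := Real.sq_sqrt hα.le
  have eβ : √β ^ 2 = β := Real.sq_sqrt hβ.le
  have hfac : 1 - 2 / (1 + √(β / α)) = (√β - √α) / (√β + √α) := by
    rw [Real.sqrt_div hβ.le]
    field_simp
    ring
  rw [hfac]
  generalize √α = s at *
  generalize √β = t at *
  set d := (β - α) / 4 with hd
  have hd0 : 0 ≤ d := by linarith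
  obtain ⟨D, hD1, hD2, hD3⟩ := aux_dick d k
  set u := (s + t) ^ 2 / 4
  set v := (t - s) ^ 2 / 4
  have hu : 0 < u := by positivity
  have hv : 0 ≤ v := by positivity
  have huv : u * v = d ^ 2 := by
    rw [hd, ← eα, ← eβ]; simp only [u, v]; ring
  have hy0 : u + v = (α + β) / 2 := by
    rw [← eα, ← eβ]; simp only [u, v]; ring
  have hval := hD2 u v huv
  have hpos : 0 < u ^ k + v ^ k := by positivity
  refine ⟨C (u ^ k + v ^ k)⁻¹ * D.comp (C ((a ^ 2 + b ^ 2) / 2) - (X + C τ) ^ 2), ?_, ?_, ?_⟩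
  · refine (natDegree_C_mul_le _ _).trans (natDegree_comp_le.trans ?_)
    rw [mul_comm]
    refine Nat.mul_le_mul ?_ hD1
    compute_degree
  · have : (a ^ 2 + b ^ 2) / 2 - (0 + τ) ^ 2 = u + v := by rw [hy0, hαd, hβd]; ring
    simp only [eval_mul, eval_C, eval_comp, eval_sub, eval_pow, eval_add, eval_X]
    rw [this, hval]
    exact inv_mul_cancel₀ hpos.ne'
  · intro x h1 h2
    simp only [eval_mul, eval_C, eval_comp, eval_sub, eval_pow, eval_add, eval_X]
    have hDb : ∀ y : ℝ, |y| ≤ 2 * d → |D.eval y| ≤ 2 * d ^ k := by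
      intro y hy
      obtain ⟨θ, hθ⟩ : ∃ θ, y = 2 * d * Real.cos θ := by
        rcases hd0.eq_or_lt with h | h
        · refine ⟨0, ?_⟩
          rw [← h] at hy ⊢
          simpa using hy
        · refine ⟨Real.arccos (y / (2 * d)), ?_⟩
          rw [abs_le] at hy
          rw [Real.cos_arccos]
          · field_simp
          · rw [le_div_iff₀ (by linarith)]; linarith
          · rw [div_le_iff₀ (by linarith)]; linarith
      rw [hθ, hD3, abs_mul, abs_of_nonneg (by positivity : 0 ≤ 2 * d ^ k)]
      exact mul_le_of_le_one_right (by positivity) (Real.abs_cos_le_one _)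
    have hb := hDb ((a ^ 2 + b ^ 2) / 2 - (x + τ) ^ 2) (by
      rw [abs_le]; constructor <;> (rw [hd, hαd, hβd]; linarith))
    rw [abs_mul, abs_of_pos (inv_pos.2 hpos)]
    have hdu : (t - s) / (t + s) = d / u := by
      rw [hd, ← eα, ← eβ]; simp only [u]
      have : 0 < t + s := by linarith
      have : 0 < s + t := by linarith
      field_simp
      ring
    clear_value u v
    rw [hdu, div_pow]
    calc _ ≤ (u ^ k)⁻¹ * (2 * d ^ k) := by
          gcongr
          linarith [pow_nonneg hv k]
      _ = _ := by field_simp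

theorem aux_key {G : Type*} [NormedAddCommGroup G] [InnerProductSpace ℝ G] (p q z : G)
    (hp : ‖p‖ = 1) (hq : ‖q‖ = 1) (hz : inner ℝ q z = 0) :
      0 ≤ 1 - (inner ℝ p q) ^ 2 ∧ |inner ℝ p z| ≤ √(1 - (inner ℝ p q) ^ 2) * ‖z‖ := by
  have e : ‖p - (inner ℝ p q) • q‖ ^ 2 = 1 - (inner ℝ p q) ^ 2 := by
    rw [norm_sub_sq_real, norm_smul, inner_smul_right, hp, hq, Real.norm_eq_abs, mul_one, sq_abs]
    ring
  have h0 : 0 ≤ 1 - (inner ℝ p q) ^ 2 := by rw [← e]; positivity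
  refine ⟨h0, ?_⟩
  rw [← e, Real.sqrt_sq (norm_nonneg _)]
  have : inner ℝ p z = inner ℝ (p - (inner ℝ p q) • q) z := by
    rw [inner_sub_left, inner_smul_left, hz]; simp
  rw [this]
  exact abs_real_inner_le_norm _ _

theorem aux_key2 {G : Type*} [NormedAddCommGroup G] [InnerProductSpace ℝ G] (p z : G)
      (hp : ‖p‖ = 1) : ‖z - (inner ℝ p z) • p‖ ^ 2 = ‖z‖ ^ 2 - (inner ℝ p z) ^ 2 := by
  rw [norm_sub_sq_real, norm_smul, inner_smul_right, hp, Real.norm_eq_abs, mul_one, sq_abs,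
    real_inner_comm]
  ring

theorem aux_inner {E F : Type*} [NormedAddCommGroup E] [InnerProductSpace ℝ E]
    [NormedAddCommGroup F] [InnerProductSpace ℝ F] (T : E →ₗ[ℝ] F) (v vt x : E) (u ut : F)
    (hv : ‖v‖ = 1) (hvt : ‖vt‖ = 1) (hu : ‖u‖ = 1) (hut : ‖ut‖ = 1)
    (σ1 s2 a : ℝ) (h1 : 0 ≤ σ1) (h2 : 0 ≤ s2) (hTv : T v = σ1 • u)
    (horth : ∀ y, inner ℝ v y = 0 → inner ℝ u (T y) = 0)
    (hlow : ∀ y, inner ℝ v y = 0 → s2 * ‖y‖ ≤ ‖T y‖)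
    (hs1 : σ1 ≤ a) (hs2 : s2 ≤ a) (hx : inner ℝ vt x = 0) :
    (s2 - a * (√(1 - (inner ℝ u ut) ^ 2) + √(1 - (inner ℝ v vt) ^ 2)) ^ 2) * ‖x‖ ≤
      ‖T x - (inner ℝ ut (T x)) • ut‖ := by
  obtain ⟨ht0, htb⟩ := aux_key v vt x hv hvt hx
  have hzero : inner ℝ u (0 : F) = (0 : ℝ) := by simp
  set x' := x - (inner ℝ v x) • v with hx'
  have hvx' : inner ℝ v x' = 0 := by
    rw [hx', inner_sub_right, inner_smul_right, real_inner_self_eq_norm_sq, hv]; ring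
  obtain ⟨hs0, hsb⟩ := aux_key ut u (T x') hut hu (horth _ hvx')
  rw [real_inner_comm u ut] at hs0 hsb
  set c := (inner ℝ v x : ℝ) with hc
  have hx2 : ‖x'‖ ^ 2 = ‖x‖ ^ 2 - c ^ 2 := aux_key2 v x hv
  set s := √(1 - (inner ℝ u ut) ^ 2) with hs
  set t := √(1 - (inner ℝ v vt) ^ 2) with ht
  have hsn : 0 ≤ s := Real.sqrt_nonneg _
  have htn : 0 ≤ t := Real.sqrt_nonneg _
  have hs1' : s ^ 2 ≤ 1 := by rw [hs, Real.sq_sqrt hs0]; nlinarith [sq_nonneg (inner ℝ u ut)]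
  have ht1' : t ^ 2 ≤ 1 := by rw [ht, Real.sq_sqrt ht0]; nlinarith [sq_nonneg (inner ℝ v vt)]
  have gen : ∀ m n e q : ℝ, 0 ≤ m → 0 ≤ n → 0 ≤ q → q ^ 2 ≤ 1 → m ^ 2 = n ^ 2 - e ^ 2 →
      |e| ≤ q * n → (1 - q ^ 2) * n ≤ m := by
    intro m n e q hm hn hq hq1 h he
    apply le_of_sq_le_sq _ hm
    have : e ^ 2 ≤ (q * n) ^ 2 := by rw [← sq_abs e]; gcongr
    have h3 : (1 - q ^ 2) * (1 - q ^ 2) * n ^ 2 ≤ 1 * (1 - q ^ 2) * n ^ 2 := by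
      gcongr
      nlinarith [sq_nonneg q]
    nlinarith
  have hx'l : (1 - t ^ 2) * ‖x‖ ≤ ‖x'‖ :=
    gen _ _ _ _ (norm_nonneg _) (norm_nonneg _) htn ht1' hx2 htb
  have hTl : (1 - s ^ 2) * ‖T x'‖ ≤ ‖T x' - (inner ℝ ut (T x')) • ut‖ :=
    gen _ _ _ _ (norm_nonneg _) (norm_nonneg _) hsn hs1' (aux_key2 ut (T x') hut) hsb
  have hul : ‖u - (inner ℝ ut u) • ut‖ = s := by
    rw [hs, ← Real.sqrt_sq (norm_nonneg (u - (inner ℝ ut u) • ut)), aux_key2 ut u hut, hu,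
      real_inner_comm]; norm_num
  have hdec : T x - (inner ℝ ut (T x)) • ut =
      (T x' - (inner ℝ ut (T x')) • ut) + (c * σ1) • (u - (inner ℝ ut u) • ut) := by
    have : x = x' + c • v := by rw [hx']; abel
    rw [this, map_add, map_smul, hTv, inner_add_right, inner_smul_right, inner_smul_right]
    module
  have hnn : ‖(c * σ1) • (u - (inner ℝ ut u) • ut)‖ ≤ (t * ‖x‖) * σ1 * s := by
    rw [norm_smul, hul, Real.norm_eq_abs, abs_mul, abs_of_nonneg h1]
    gcongr
  have hfin := norm_sub_le_norm_add (T x' - (inner ℝ ut (T x')) • ut)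
    ((c * σ1) • (u - (inner ℝ ut u) • ut))
  rw [← hdec] at hfin
  have hA := hlow x' hvx'
  have h5 : (1 - s ^ 2) * (s2 * ((1 - t ^ 2) * ‖x‖)) ≤ (1 - s ^ 2) * ‖T x'‖ := by
    refine mul_le_mul_of_nonneg_left (le_trans ?_ hA) (by linarith)
    gcongr
  have h6 : (s2 - a * (s + t) ^ 2) * ‖x‖ ≤
      ((1 - s ^ 2) * (s2 * ((1 - t ^ 2)))  - t * σ1 * s) * ‖x‖ := by
    refine mul_le_mul_of_nonneg_right ?_ (norm_nonneg _)
    have q1 : s2 * (s ^ 2 + t ^ 2) ≤ a * (s ^ 2 + t ^ 2) := by gcongr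
    have q2 : σ1 * (s * t) ≤ a * (s * t) := by gcongr
    have q3 : 0 ≤ s2 * (s ^ 2 * t ^ 2) := by positivity
    have q4 : 0 ≤ a * (s * t) := by
      have : 0 ≤ a := h1.trans hs1
      positivity
    linarith
  have h7 : (1 - s ^ 2) * (s2 * ((1 - t ^ 2) * ‖x‖)) = (1 - s ^ 2) * (s2 * ((1 - t ^ 2))) * ‖x‖ := by ring
  linarith

theorem aux_vnorm_sq {ι : Type*} [Fintype ι] (x : ι → ℝ) : vnorm x ^ 2 = x ⬝ᵥ x := by
  rw [vnorm, Real.sq_sqrt (Finset.sum_nonneg fun i _ => sq_nonneg _)]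
  simp [dotProduct, sq]

theorem aux_vnorm_nonneg {ι : Type*} [Fintype ι] (x : ι → ℝ) : 0 ≤ vnorm x :=
  Real.sqrt_nonneg _

theorem aux_norm_toLp {ι : Type*} [Fintype ι] (x : ι → ℝ) : ‖WithLp.toLp 2 x‖ = vnorm x := by
  rw [EuclideanSpace.norm_eq, vnorm]; simp

theorem aux_inner_toLp {ι : Type*} [Fintype ι] (x y : ι → ℝ) :
    inner ℝ (WithLp.toLp 2 x) (WithLp.toLp 2 y) = x ⬝ᵥ y := by
  rw [EuclideanSpace.inner_toLp_toLp, dotProduct_comm]; simp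

theorem aux_low {m n : Type*} [Fintype m] [Fintype n] [DecidableEq m] [DecidableEq n]
    (A : Matrix m n ℝ) (v vt : n → ℝ) (u ut : m → ℝ)
    (hv : v ⬝ᵥ v = 1) (hvt : vt ⬝ᵥ vt = 1) (hu : u ⬝ᵥ u = 1) (hut : ut ⬝ᵥ ut = 1)
    (σ1 s2 a : ℝ) (h1 : 0 ≤ σ1) (h2 : 0 ≤ s2) (hTv : A *ᵥ v = σ1 • u) (hTu : Aᵀ *ᵥ u = σ1 • v)
    (hlow : ∀ y, v ⬝ᵥ y = 0 → s2 ^ 2 * (y ⬝ᵥ y) ≤ (A *ᵥ y) ⬝ᵥ (A *ᵥ y))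
    (hs1 : σ1 ≤ a) (hs2 : s2 ≤ a) (L : ℝ) (hL0 : 0 ≤ L)
    (hL : L = s2 - a * (√(1 - (u ⬝ᵥ ut) ^ 2) + √(1 - (v ⬝ᵥ vt) ^ 2)) ^ 2)
    (x : n → ℝ) (hx : vt ⬝ᵥ x = 0) :
    L ^ 2 * (x ⬝ᵥ x) ≤ (A *ᵥ x - (ut ⬝ᵥ (A *ᵥ x)) • ut) ⬝ᵥ (A *ᵥ x - (ut ⬝ᵥ (A *ᵥ x)) • ut) := by
  have hone : ∀ {ι : Type _} [Fintype ι] (w : ι → ℝ), w ⬝ᵥ w = 1 → vnorm w = 1 := by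
    intro ι _ w hw
    rw [← aux_vnorm_sq] at hw
    nlinarith [aux_vnorm_nonneg w]
  have hone' : ∀ {ι : Type _} [Fintype ι] (w : ι → ℝ), w ⬝ᵥ w = 1 → vnorm w = 1 := by
    intro ι _ w hw
    rw [← aux_vnorm_sq] at hw
    nlinarith [aux_vnorm_nonneg w]
  have := aux_inner (Matrix.toEuclideanLin A) (WithLp.toLp 2 v) (WithLp.toLp 2 vt)
    (WithLp.toLp 2 x) (WithLp.toLp 2 u) (WithLp.toLp 2 ut)
    (by rw [aux_norm_toLp, hone v hv]) (by rw [aux_norm_toLp, hone vt hvt])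
    (by rw [aux_norm_toLp, hone' u hu]) (by rw [aux_norm_toLp, hone' ut hut]) σ1 s2 a h1 h2
    (by rw [toLpLin_toLp, toLin'_apply, hTv]; rfl)
    (by
      intro y hy
      obtain ⟨y, rfl⟩ := (WithLp.toLp_surjective 2) y
      rw [aux_inner_toLp] at hy
      rw [toLpLin_toLp, toLin'_apply, aux_inner_toLp, dotProduct_mulVec, ← mulVec_transpose, hTu,
        smul_dotProduct, hy, smul_zero])
    (by
      intro y hy
      obtain ⟨y, rfl⟩ := (WithLp.toLp_surjective 2) y
      rw [aux_inner_toLp] at hy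
      rw [toLpLin_toLp, toLin'_apply, aux_norm_toLp, aux_norm_toLp]
      have := hlow y hy
      rw [← aux_vnorm_sq, ← aux_vnorm_sq, ← mul_pow] at this
      exact le_of_sq_le_sq this (aux_vnorm_nonneg _))
    hs1 hs2 (by rw [aux_inner_toLp, hx])
  rw [aux_inner_toLp, aux_inner_toLp, ← hL, toLpLin_toLp, toLin'_apply, aux_inner_toLp, ← WithLp.toLp_smul,
    ← WithLp.toLp_sub, aux_norm_toLp, aux_norm_toLp] at this
  rw [← aux_vnorm_sq, ← aux_vnorm_sq, ← mul_pow]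
  have h0 := aux_vnorm_nonneg x
  gcongr

theorem aux_svd {M N : ℕ} (hMN : N ≤ M) (A : Matrix (Fin M) (Fin N) ℝ)
    (U : Matrix (Fin M) (Fin M) ℝ) (V : Matrix (Fin N) (Fin N) ℝ)
    (hU : Uᵀ * U = 1) (σ : Fin N → ℝ)
    (S : Matrix (Fin M) (Fin N) ℝ)
    (hS : ∀ i j, S i j = if (i : ℕ) = (j : ℕ) then σ j else 0)
    (hA : A = U * S * Vᵀ) (y : Fin N → ℝ) :
    (A *ᵥ y) ⬝ᵥ (A *ᵥ y) = ∑ j, σ j ^ 2 * ((Vᵀ *ᵥ y) j) ^ 2 := by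
  have hSS : Sᵀ * S = diagonal (fun j => σ j ^ 2) := by
    ext i j
    rw [mul_apply, diagonal_apply, Finset.sum_eq_single (Fin.castLE hMN i)]
    · simp only [transpose_apply, hS, Fin.val_castLE, if_true]
      by_cases h : i = j
      · simp [h, sq]
      · have : (i : ℕ) ≠ j := fun h' => h (Fin.ext h')
        simp [h, this]
    · intro b _ hb
      have : (b : ℕ) ≠ i := fun h => hb (Fin.ext h)
      simp [hS, this]
    · simp
  have hAA : Aᵀ * A = V * (diagonal (fun j => σ j ^ 2) * Vᵀ) := by
    rw [hA, ← hSS]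
    simp only [transpose_mul, transpose_transpose, Matrix.mul_assoc]
    rw [← Matrix.mul_assoc Uᵀ U, hU, Matrix.one_mul]
  rw [dotProduct_mulVec, ← mulVec_transpose, mulVec_mulVec, hAA, ← mulVec_mulVec, dotProduct_comm,
    dotProduct_mulVec, ← mulVec_transpose, ← mulVec_mulVec]
  simp only [dotProduct, mulVec_diagonal]
  exact Finset.sum_congr rfl fun j _ => by ring

theorem aux_orth_norm {n : Type*} [Fintype n] [DecidableEq n] (V : Matrix n n ℝ) (hV : Vᵀ * V = 1)
    (y : n → ℝ) : y ⬝ᵥ y = ∑ j, ((Vᵀ *ᵥ y) j) ^ 2 := by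
  have h : V * Vᵀ = 1 := mul_eq_one_comm.1 hV
  have : (Vᵀ *ᵥ y) ⬝ᵥ (Vᵀ *ᵥ y) = y ⬝ᵥ y := by
    rw [dotProduct_mulVec, ← mulVec_transpose, mulVec_mulVec, transpose_transpose, h, one_mulVec]
  rw [← this]; simp [dotProduct, sq]

theorem aux_col {m n : Type*} [Fintype m] [Fintype n] [DecidableEq m] [DecidableEq n]
    (A S : Matrix m n ℝ) (U : Matrix m m ℝ) (V : Matrix n n ℝ) (hV : Vᵀ * V = 1)
    (hA : A = U * S * Vᵀ) (i : m) (j : n) (c : ℝ) (hij : S i j = c)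
    (hk : ∀ k, k ≠ i → S k j = 0) :
    A *ᵥ (fun k => V k j) = c • (fun k => U k i) := by
  have h : A * V = U * S := by rw [hA, Matrix.mul_assoc, hV, Matrix.mul_one]
  ext k
  have h2 : (A *ᵥ (fun k => V k j)) k = (A * V) k j := by simp [mulVec, dotProduct, mul_apply]
  rw [h2, h, mul_apply, Finset.sum_eq_single i]
  · simp [hij, mul_comm]
  · intro b _ hb; rw [hk b hb, mul_zero]
  · simp

theorem aux_colnorm {n : Type*} [Fintype n] [DecidableEq n] (V : Matrix n n ℝ) (hV : Vᵀ * V = 1)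
    (j : n) : (fun k => V k j) ⬝ᵥ (fun k => V k j) = 1 := by
  have := congrFun (congrFun hV j) j
  simpa [mul_apply, dotProduct] using this

theorem aux_spec {m n : Type*} [Fintype m] [Fintype n] [DecidableEq n] (A : Matrix m n ℝ)
    (v : n → ℝ) (u : m → ℝ) (c : ℝ) (hc : 0 ≤ c) (hv : v ⬝ᵥ v = 1) (hu : u ⬝ᵥ u = 1)
    (h : A *ᵥ v = c • u) : c ≤ specNorm A := by
  have h1 := (LinearMap.toContinuousLinearMap (Matrix.toEuclideanLin A)).le_opNorm (WithLp.toLp 2 v)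
  rw [LinearMap.coe_toContinuousLinearMap', toLpLin_toLp, toLin'_apply, aux_norm_toLp, aux_norm_toLp] at h1
  have e1 : vnorm v = 1 := by
    rw [← aux_vnorm_sq] at hv
    nlinarith [aux_vnorm_nonneg v]
  have e2 : vnorm (A *ᵥ v) = c := by
    have : vnorm (A *ᵥ v) ^ 2 = c ^ 2 := by
      rw [aux_vnorm_sq, h, smul_dotProduct, dotProduct_smul, hu]; simp [sq]
    exact (sq_eq_sq₀ (aux_vnorm_nonneg _) hc).1 this
  change vnorm (A *ᵥ v) ≤ _ at h1
  rw [e1, e2, mul_one] at h1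
  exact h1

theorem aux_eig {M N : ℕ} (A : Matrix (Fin M) (Fin N) ℝ) (τ a b : ℝ) (ha : 0 < a)
    (ut : Fin M → ℝ) (vt : Fin N → ℝ) (hut : ut ⬝ᵥ ut = 1) (hvt : vt ⬝ᵥ vt = 1)
    (hlow1 : ∀ g, vt ⬝ᵥ g = 0 → a ^ 2 * (g ⬝ᵥ g) ≤
      (A *ᵥ g - (ut ⬝ᵥ (A *ᵥ g)) • ut) ⬝ᵥ (A *ᵥ g - (ut ⬝ᵥ (A *ᵥ g)) • ut))
    (hlow2 : M = N → ∀ f, ut ⬝ᵥ f = 0 → a ^ 2 * (f ⬝ᵥ f) ≤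
      (Aᵀ *ᵥ f - (vt ⬝ᵥ (Aᵀ *ᵥ f)) • vt) ⬝ᵥ (Aᵀ *ᵥ f - (vt ⬝ᵥ (Aᵀ *ᵥ f)) • vt))
    (hup : ∀ g, (A *ᵥ g) ⬝ᵥ (A *ᵥ g) ≤ b ^ 2 * (g ⬝ᵥ g))
    (B P B1 : Matrix (Fin M ⊕ Fin N) (Fin M ⊕ Fin N) ℝ)
    (hB : B = Matrix.fromBlocks ((-τ) • 1) A Aᵀ ((-τ) • 1))
    (hP : P = Matrix.fromBlocks (1 - vecMulVec ut ut) 0 0 (1 - vecMulVec vt vt))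
    (hB1 : B1 = P * B * P) (x : Fin M ⊕ Fin N → ℝ) (hx0 : x ≠ 0) (hPx : P *ᵥ x = x) (l : ℝ)
    (hx : B1 *ᵥ x = l • x) :
    (a ^ 2 ≤ (l + τ) ^ 2 ∧ (l + τ) ^ 2 ≤ b ^ 2) ∨ (l + τ = 0 ∧ M ≠ N) := by
  obtain ⟨f, g, rfl⟩ : ∃ f g, x = Sum.elim f g := ⟨x ∘ Sum.inl, x ∘ Sum.inr, by simp⟩
  have hPm : ∀ f g, P *ᵥ (Sum.elim f g) =
      Sum.elim (f - (ut ⬝ᵥ f) • ut) (g - (vt ⬝ᵥ g) • vt) := by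
    intro f g
    rw [hP, fromBlocks_mulVec]
    simp [sub_mulVec, vecMulVec_mulVec]
  have hBm : B *ᵥ (Sum.elim f g) = Sum.elim (-τ • f + A *ᵥ g) (Aᵀ *ᵥ f + -τ • g) := by
    rw [hB, fromBlocks_mulVec]
    simp [neg_mulVec, smul_mulVec]
  rw [hB1, ← mulVec_mulVec, hPx, ← mulVec_mulVec, hBm, hPm] at hx
  rw [hPm] at hPx
  have hf0 : ut ⬝ᵥ f = 0 := by
    have h1 : f - (ut ⬝ᵥ f) • ut = f := by
      funext i; simpa using congrFun hPx (Sum.inl i)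
    have h2 := congrArg (fun z => ut ⬝ᵥ z) h1
    simp only [dotProduct_sub, dotProduct_smul, hut, smul_eq_mul] at h2
    linarith
  have hg0 : vt ⬝ᵥ g = 0 := by
    have h1 : g - (vt ⬝ᵥ g) • vt = g := by
      funext i; simpa using congrFun hPx (Sum.inr i)
    have h2 := congrArg (fun z => vt ⬝ᵥ z) h1
    simp only [dotProduct_sub, dotProduct_smul, hvt, smul_eq_mul] at h2
    linarith
  have hx1 : A *ᵥ g - (ut ⬝ᵥ (A *ᵥ g)) • ut = (l + τ) • f := by
    funext i
    have := congrFun hx (Sum.inl i)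
    simp only [Sum.elim_inl, Pi.smul_apply, Pi.sub_apply, Pi.add_apply, smul_eq_mul,
      dotProduct_add, dotProduct_smul, hf0] at this ⊢
    linarith
  have hx2 : Aᵀ *ᵥ f - (vt ⬝ᵥ (Aᵀ *ᵥ f)) • vt = (l + τ) • g := by
    funext i
    have := congrFun hx (Sum.inr i)
    simp only [Sum.elim_inr, Pi.smul_apply, Pi.sub_apply, Pi.add_apply, smul_eq_mul,
      dotProduct_add, dotProduct_smul, hg0] at this ⊢
    linarith
  have pos : ∀ {n : ℕ} (w : Fin n → ℝ), w ≠ 0 → 0 < w ⬝ᵥ w := by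
    intro n w hw
    have := dotProduct_star_self_pos_iff.2 hw
    simpa using this
  by_cases hg : g = 0
  · right
    have hf : f ≠ 0 := by
      rintro rfl
      apply hx0
      rw [hg]; ext i; cases i <;> rfl
    have hz : l + τ = 0 := by
      rw [hg, mulVec_zero] at hx1
      have : (l + τ) • f = 0 := by rw [← hx1]; simp
      exact (smul_eq_zero.1 this).resolve_right hf
    refine ⟨hz, fun h => ?_⟩
    have := hlow2 h f hf0
    rw [hx2, hz] at this
    simp only [zero_smul, zero_dotProduct] at this
    have := pos f hf
    have : 0 < a ^ 2 * (f ⬝ᵥ f) := by positivity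
    linarith
  · left
    have hgp := pos g hg
    have e1 : (l + τ) * (g ⬝ᵥ g) = (A *ᵥ g) ⬝ᵥ f := by
      have := congrArg (fun z => g ⬝ᵥ z) hx2
      simp only [dotProduct_sub, dotProduct_smul, smul_eq_mul, dotProduct_comm g vt, hg0,
        mul_zero, sub_zero] at this
      rw [← this, dotProduct_mulVec, ← mulVec_transpose, transpose_transpose]
    have e2 : (A *ᵥ g) ⬝ᵥ f = (l + τ) * (f ⬝ᵥ f) := by
      have := congrArg (fun z => f ⬝ᵥ z) hx1
      simp only [dotProduct_sub, dotProduct_smul, smul_eq_mul, dotProduct_comm f ut, hf0,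
        mul_zero, sub_zero] at this
      rw [← this, dotProduct_comm]
    have e3 : ((l + τ) • f) ⬝ᵥ ((l + τ) • f) = (l + τ) ^ 2 * (g ⬝ᵥ g) := by
      rw [smul_dotProduct, dotProduct_smul, smul_eq_mul, smul_eq_mul, ← e2, ← e1]; ring
    have h1 := hlow1 g hg0
    rw [hx1, e3] at h1
    have h2 : (l + τ) ^ 2 * (g ⬝ᵥ g) ≤ (A *ᵥ g) ⬝ᵥ (A *ᵥ g) := by
      rw [← e3, ← hx1]
      simp only [dotProduct_sub, sub_dotProduct, smul_dotProduct, dotProduct_smul, smul_eq_mul,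
        hut, dotProduct_comm (A *ᵥ g) ut]
      nlinarith [sq_nonneg (ut ⬝ᵥ (A *ᵥ g))]
    exact ⟨le_of_mul_le_mul_right h1 hgp, le_of_mul_le_mul_right (h2.trans (hup g)) hgp⟩

open Polynomial in
theorem aux_aeval {n : Type*} [Fintype n] [DecidableEq n] (B : Matrix n n ℝ) (p : ℝ[X])
    (x : n → ℝ) (l : ℝ) (hx : B *ᵥ x = l • x) : (aeval B p) *ᵥ x = p.eval l • x := by
  have hpow : ∀ k : ℕ, (B ^ k) *ᵥ x = l ^ k • x := by
    intro k
    induction k with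
    | zero => simp
    | succ k ih => rw [pow_succ, ← mulVec_mulVec, hx, mulVec_smul, ih, smul_smul]; ring_nf
  induction p using Polynomial.induction_on' with
  | add p q hp hq => rw [map_add, add_mulVec, hp, hq, eval_add, add_smul]
  | monomial k c =>
    rw [aeval_monomial, Algebra.algebraMap_eq_smul_one, smul_mul_assoc, one_mul, smul_mulVec, hpow,
      eval_monomial, smul_smul]

open Polynomial in
theorem aux_aeval_tr {n : Type*} [Fintype n] [DecidableEq n] (B : Matrix n n ℝ) (p : ℝ[X])
    (hB : Bᵀ = B) : (aeval B p)ᵀ = aeval B p := by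
  induction p using Polynomial.induction_on' with
  | add p q hp hq => rw [map_add, transpose_add, hp, hq]
  | monomial k c =>
    rw [aeval_monomial, Algebra.algebraMap_eq_smul_one, smul_mul_assoc, one_mul, transpose_smul,
      transpose_pow, hB]

open Polynomial in
theorem aux_spectral {n : Type*} [Fintype n] [DecidableEq n] (B P : Matrix n n ℝ) (p : ℝ[X])
    (hB : Bᵀ = B) (hP : Pᵀ = P) (hPP : P * P = P) (hPB : P * B = B) (hBP : B * P = B) (K : ℝ)
    (hK0 : 0 ≤ K)
    (hK : ∀ (l : ℝ) (x : n → ℝ), x ≠ 0 → P *ᵥ x = x → B *ᵥ x = l • x → |p.eval l| ≤ K)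
    (r : n → ℝ) (hr : P *ᵥ r = r) : vnorm (aeval B p *ᵥ r) ≤ K * vnorm r := by
  have hH : B.IsHermitian := by rw [Matrix.IsHermitian, conjTranspose_eq_transpose_of_trivial, hB]
  set e := hH.eigenvectorBasis with he
  have hsq : ∀ x : n → ℝ, vnorm x ^ 2 = ∑ i, ((e i).ofLp ⬝ᵥ x) ^ 2 := by
    intro x
    rw [← aux_norm_toLp, ← e.sum_sq_inner_right]
    refine Finset.sum_congr rfl fun i _ => ?_
    rw [← aux_inner_toLp]
  have hev : ∀ i, B *ᵥ (e i).ofLp = hH.eigenvalues i • (e i).ofLp := fun i =>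
    hH.mulVec_eigenvectorBasis i
  apply le_of_sq_le_sq _ (mul_nonneg hK0 (aux_vnorm_nonneg r))
  rw [mul_pow, hsq, hsq r, Finset.mul_sum]
  refine Finset.sum_le_sum fun i _ => ?_
  rw [dotProduct_mulVec, ← mulVec_transpose, aux_aeval_tr B p hB, aux_aeval B p _ _ (hev i),
    smul_dotProduct, smul_eq_mul, mul_pow]
  by_cases h : P *ᵥ (e i).ofLp = 0
  · have : (e i).ofLp ⬝ᵥ r = 0 := by
      rw [← hr, dotProduct_mulVec, ← mulVec_transpose, hP, h, zero_dotProduct]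
    rw [this]; simp
  · have := hK (hH.eigenvalues i) _ h (by rw [mulVec_mulVec, hPP]) (by
      rw [mulVec_mulVec, hBP, ← mulVec_smul, ← hev i, mulVec_mulVec, hPB])
    rw [← sq_abs (eval _ p)]
    gcongr

open Polynomial in
theorem aux_krylov {n : Type*} [Fintype n] [DecidableEq n] (B : Matrix n n ℝ) (p : ℝ[X]) (j : ℕ)
    (hd : p.natDegree ≤ j) (h0 : p.eval 0 = 1) (r : n → ℝ) :
    ∃ w ∈ Krylov B r j, B *ᵥ w + r = aeval B p *ᵥ r := by
  refine ⟨aeval B p.divX *ᵥ r, ?_, ?_⟩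
  · rw [aeval_eq_sum_range' (n := j + 1) (by rw [natDegree_divX_eq_natDegree_tsub_one]; omega),
      sum_mulVec]
    refine Submodule.sum_mem _ fun i _ => ?_
    rw [smul_mulVec]
    by_cases hi : i < j
    · exact Submodule.smul_mem _ _ (Submodule.subset_span ⟨i, hi, rfl⟩)
    · rw [coeff_divX, coeff_eq_zero_of_natDegree_lt (by omega), zero_smul]
      exact Submodule.zero_mem _
  · conv_rhs => rw [← divX_mul_X_add p]
    rw [coeff_zero_eq_eval_zero, h0, mul_comm]
    simp [add_mulVec]

theorem aux_main {M N : ℕ} (i0 : Fin N) (hMN : N ≤ M)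
    (A : Matrix (Fin M) (Fin N) ℝ)
    (U : Matrix (Fin M) (Fin M) ℝ) (V : Matrix (Fin N) (Fin N) ℝ)
    (hU : Uᵀ * U = 1) (hV : Vᵀ * V = 1)
    (σ : Fin N → ℝ)
    (S : Matrix (Fin M) (Fin N) ℝ)
    (hS : ∀ i j, S i j = if (i : ℕ) = (j : ℕ) then σ j else 0)
    (hA : A = U * S * Vᵀ)
    (s2 : ℝ) (hs2 : 0 ≤ s2) (h2 : ∀ i : Fin N, i ≠ i0 → s2 ≤ σ i)
    (y : Fin N → ℝ) (hy : (fun i => V i i0) ⬝ᵥ y = 0) :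
    s2 ^ 2 * (y ⬝ᵥ y) ≤ (A *ᵥ y) ⬝ᵥ (A *ᵥ y) := by
  rw [aux_svd hMN A U V hU σ S hS hA, aux_orth_norm V hV, Finset.mul_sum]
  refine Finset.sum_le_sum fun i _ => ?_
  by_cases hi : i = i0
  · have : (Vᵀ *ᵥ y) i = 0 := by rw [hi, ← hy]; rfl
    rw [this]; simp
  · have := h2 i hi
    gcongr
/-- Theorem 3.5(ii). MINRES bound for the JDSVD correction equation with
approximate singular vectors, in the case `σ₁ = σ_min`. -/
theorem minres_bound_approx_smallest {M N : ℕ} (hN : 2 ≤ N) (hMN : N ≤ M)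
    (A : Matrix (Fin M) (Fin N) ℝ)
    (U : Matrix (Fin M) (Fin M) ℝ) (V : Matrix (Fin N) (Fin N) ℝ)
    (hU : Uᵀ * U = 1) (hV : Vᵀ * V = 1)
    (σ : Fin N → ℝ) (hσ : ∀ i, 0 ≤ σ i)
    (S : Matrix (Fin M) (Fin N) ℝ)
    (hS : ∀ i j, S i j = if (i : ℕ) = (j : ℕ) then σ j else 0)
    (hA : A = U * S * Vᵀ)
    (τ : ℝ) (hτ0 : 0 < τ)
    (hclosest : ∀ i : Fin N, i ≠ ⟨0, by omega⟩ → |σ ⟨0, by omega⟩ - τ| < |σ i - τ|)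
    (σmax σmin σmin2 : ℝ)
    (hσmax : IsGreatest (Set.range σ) σmax)
    (hσmin : IsLeast (Set.range σ) σmin)
    (hσmin2 : IsLeast (σ '' {i : Fin N | i ≠ ⟨0, by omega⟩}) σmin2)
    (hτ1 : σmin ≤ τ) (hτ2 : τ < (σmin + σmin2) / 2)
    (u1 : Fin M → ℝ) (hu1 : u1 = fun i => U i ⟨0, by omega⟩)
    (v1 : Fin N → ℝ) (hv1 : v1 = fun i => V i ⟨0, by omega⟩)
    (u1t : Fin M → ℝ) (hu1t : ∑ i, u1t i ^ 2 = 1)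
    (v1t : Fin N → ℝ) (hv1t : ∑ i, v1t i ^ 2 = 1)
    (δ : ℝ)
    (hδ : δ = specNorm A *
      (Real.sqrt (1 - (u1 ⬝ᵥ u1t) ^ 2) + Real.sqrt (1 - (v1 ⬝ᵥ v1t) ^ 2)) ^ 2)
    (hδsmall : δ < σmin2 - τ)
    (B P B1 : Matrix (Fin M ⊕ Fin N) (Fin M ⊕ Fin N) ℝ)
    (hB : B = Matrix.fromBlocks ((-τ) • 1) A Aᵀ ((-τ) • 1))
    (hP : P = Matrix.fromBlocks (1 - vecMulVec u1t u1t) 0 0 (1 - vecMulVec v1t v1t))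
    (hB1 : B1 = P * B * P)
    (r : Fin M ⊕ Fin N → ℝ) (hr : P *ᵥ r = r) :
    ∀ j : ℕ, min 1 (M - N) ≤ j → ∃ w ∈ Krylov B1 r j,
      vnorm (B1 *ᵥ w + r) ≤
        2 * ((σmax + δ) / τ) ^ (min 1 (M - N)) *
          (1 - 2 / (1 + Real.sqrt (((σmax + δ) ^ 2 - τ ^ 2) / ((σmin2 - δ) ^ 2 - τ ^ 2)))) ^
            ((j - min 1 (M - N)) / 2) * vnorm r := by
  intro j hj
  have hA1 : A *ᵥ v1 = σ ⟨0, by omega⟩ • u1 := by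
    rw [hv1, hu1]
    refine aux_col A S U V hV hA _ _ _ (by rw [hS]; simp) ?_
    intro k hk
    rw [hS, if_neg]
    exact fun h => hk (Fin.ext h)
  have hAt : Aᵀ = V * Sᵀ * Uᵀ := by
    rw [hA]; simp [transpose_mul, Matrix.mul_assoc]
  have hA2 : Aᵀ *ᵥ u1 = σ ⟨0, by omega⟩ • v1 := by
    rw [hv1, hu1]
    refine aux_col Aᵀ Sᵀ V U hU hAt _ _ _ (by rw [transpose_apply, hS]; simp) ?_
    intro k hk
    rw [transpose_apply, hS, if_neg]
    exact fun h => hk (Fin.ext h.symm)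
  have hu1n : u1 ⬝ᵥ u1 = 1 := by rw [hu1]; exact aux_colnorm U hU _
  have hv1n : v1 ⬝ᵥ v1 = 1 := by rw [hv1]; exact aux_colnorm V hV _
  have hutn : u1t ⬝ᵥ u1t = 1 := by rw [← hu1t]; simp [dotProduct, sq]
  have hvtn : v1t ⬝ᵥ v1t = 1 := by rw [← hv1t]; simp [dotProduct, sq]
  have hspec : ∀ i, σ i ≤ specNorm A := by
    intro i
    refine aux_spec A (fun k => V k i) (fun k => U k (Fin.castLE hMN i)) _ (hσ i)
      (aux_colnorm V hV _) (aux_colnorm U hU _) ?_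
    refine aux_col A S U V hV hA _ _ _ (by rw [hS]; simp) ?_
    intro k hk
    rw [hS, if_neg]
    exact fun h => hk (Fin.ext h)
  obtain ⟨i2, hi2, hi2e⟩ := hσmin2.1
  have hs2spec : σmin2 ≤ specNorm A := hi2e ▸ hspec i2
  have hs20 : 0 ≤ σmin2 := hi2e ▸ hσ i2
  have hspec0 : 0 ≤ specNorm A := hs20.trans hs2spec
  have hs2max : σmin2 ≤ σmax := hi2e ▸ hσmax.2 ⟨i2, rfl⟩
  have hδ0 : 0 ≤ δ := by rw [hδ]; positivity
  have h2 : ∀ i : Fin N, i ≠ ⟨0, by omega⟩ → σmin2 ≤ σ i := fun i hi => hσmin2.2 ⟨i, hi, rfl⟩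
  have ha0 : 0 < σmin2 - δ := by linarith
  have heig := aux_eig A τ (σmin2 - δ) (σmax + δ) ha0 u1t v1t hutn hvtn
    (aux_low A v1 v1t u1 u1t hv1n hvtn hu1n hutn _ σmin2 (specNorm A) (hσ _) hs20 hA1 hA2
      (by
        intro y hy
        rw [hv1] at hy
        exact aux_main _ hMN A U V hU hV σ S hS hA σmin2 hs20 h2 y hy)
      (hspec _) hs2spec _ ha0.le (by rw [hδ]))
    (by
      intro hMN'
      subst hMN'
      exact aux_low Aᵀ u1 u1t v1 v1t hu1n hutn hv1n hvtn _ σmin2 (specNorm A) (hσ _) hs20 hA2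
        (by rw [transpose_transpose]; exact hA1)
        (by
          intro y hy
          rw [hu1] at hy
          refine aux_main _ hMN Aᵀ V U hV hU σ Sᵀ ?_ hAt σmin2 hs20 h2 y hy
          intro i j
          rw [transpose_apply, hS]
          by_cases h : i = j
          · simp [h]
          · have h1 : (i : ℕ) ≠ j := fun h' => h (Fin.ext h')
            rw [if_neg h1, if_neg h1.symm])
        (hspec _) hs2spec _ ha0.le (by rw [hδ, add_comm (√_)]))
    (by
      intro g
      rw [aux_svd hMN A U V hU σ S hS hA, aux_orth_norm V hV, Finset.mul_sum]
      refine Finset.sum_le_sum fun i _ => ?_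
      have h1 := hσ i
      have h2 : σ i ≤ σmax + δ := by linarith [hσmax.2 ⟨i, rfl⟩]
      gcongr)
    B P B1 hB hP hB1
  have hPt : Pᵀ = P := by
    rw [hP, fromBlocks_transpose]
    simp [transpose_vecMulVec]
  have hPP : P * P = P := by
    rw [hP, fromBlocks_multiply]
    simp [mul_sub, sub_mul, vecMulVec_mul_vecMulVec, hutn, hvtn]
  have hBt : Bᵀ = B := by
    rw [hB, fromBlocks_transpose]
    simp
  have hB1t : B1ᵀ = B1 := by
    rw [hB1, transpose_mul, transpose_mul, hPt, hBt, Matrix.mul_assoc]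
  have hPB : P * B1 = B1 := by
    rw [hB1, ← Matrix.mul_assoc, ← Matrix.mul_assoc, hPP]
  have hBP : B1 * P = B1 := by
    rw [hB1, Matrix.mul_assoc, hPP]
  set j0 := min 1 (M - N) with hj0
  obtain ⟨p, hpd, hp0, hpb⟩ := aux_cheb (σmin2 - δ) (σmax + δ) τ hτ0 (by linarith) (by linarith)
    ((j - j0) / 2)
  set ρ := 1 - 2 / (1 + √(((σmax + δ) ^ 2 - τ ^ 2) / ((σmin2 - δ) ^ 2 - τ ^ 2))) with hρ
  have hρ0 : 0 ≤ ρ := by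
    rw [hρ]
    have h1 : 1 ≤ √(((σmax + δ) ^ 2 - τ ^ 2) / ((σmin2 - δ) ^ 2 - τ ^ 2)) := by
      rw [Real.one_le_sqrt, one_le_div (by nlinarith)]
      nlinarith
    rw [sub_nonneg, div_le_one (by linarith)]
    linarith
  have hb0 : 0 < σmax + δ := by linarith
  obtain ⟨w, hw, hwe⟩ := aux_krylov B1 (p * (1 + Polynomial.C τ⁻¹ * Polynomial.X) ^ j0) j (by
    refine Polynomial.natDegree_mul_le.trans ?_
    have : ((1 + Polynomial.C τ⁻¹ * Polynomial.X : Polynomial ℝ) ^ j0).natDegree ≤ j0 * 1 := by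
      refine Polynomial.natDegree_pow_le_of_le _ ?_
      compute_degree
    omega) (by simp [hp0]) r
  refine ⟨w, hw, ?_⟩
  rw [hwe]
  refine aux_spectral B1 P _ hB1t hPt hPP hPB hBP _ (by positivity) ?_ r hr
  intro l x hx0 hPx hx
  have hfac : 1 + τ⁻¹ * l = (l + τ) / τ := by field_simp; ring
  simp only [Polynomial.eval_mul, Polynomial.eval_pow, Polynomial.eval_add, Polynomial.eval_one,
    Polynomial.eval_C, Polynomial.eval_X]
  rw [hfac, abs_mul, abs_pow]
  rcases heig x hx0 hPx l hx with ⟨h1, h3⟩ | ⟨h1, h3⟩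
  · have h4 := hpb l h1 h3
    have h5 : |(l + τ) / τ| ≤ (σmax + δ) / τ := by
      rw [abs_div, abs_of_pos hτ0]
      have := abs_le_of_sq_le_sq h3 hb0.le
      gcongr
    calc _ ≤ (2 * ρ ^ ((j - j0) / 2)) * ((σmax + δ) / τ) ^ j0 := by gcongr
      _ = _ := by ring
  · have : j0 = 1 := by omega
    rw [h1, this]
    simp only [zero_div, abs_zero, pow_one, mul_zero]
    positivity
end
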